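/- arXiv:2007.05935 — 7 statements merged into one kernel-verified Lean document; each statement's English description precedes it below -/
import Mathlib

section
/- For every infinite cardinal κ, the relation κ⁺ ↛^poly (κ⁺-cl)²_{2-bdd} holds; that is, there exists a normal 2-bounded coloring f : [κ⁺]² → κ⁺ such that no closed subset of κ⁺ of order type κ⁺ (equivalently, no club subset of κ⁺) is f-rainbow. -/
open Set Cardinal Ordinal

universe u

/-- `A` has order type `θ`: there is an order isomorphism from `Iio θ` onto `A`. -/
def HasOType (A : Set Ordinal.{u}) (θ : Ordinal.{u}) : Prop :=
  Nonempty (Set.Iio θ ≃o A)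

/-- The order type of `A` is at most `γ`: `A` order-embeds into `Iio γ`. -/
def OTypeLE (A : Set Ordinal.{u}) (γ : Ordinal.{u}) : Prop :=
  Nonempty (A ↪o Set.Iio γ)

/-- `A` is `f`-rainbow: `f` is injective on increasing pairs from `A`. -/
def IsRainbow (f : Ordinal → Ordinal → Ordinal) (A : Set Ordinal) : Prop :=
  ∀ α ∈ A, ∀ β ∈ A, ∀ γ ∈ A, ∀ δ ∈ A,
    α < β → γ < δ → f α β = f γ δ → α = γ ∧ β = δ

/-- `f` is a normal coloring on pairs below `κ`: equal colors force equal top points. -/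
def IsNormalColoring (f : Ordinal → Ordinal → Ordinal) (κ : Ordinal) : Prop :=
  ∀ α β γ δ : Ordinal, α < β → β < κ → γ < δ → δ < κ → f α β = f γ δ → β = δ

/-- `f` is 2-bounded: every fiber of `f` on pairs below `κ` has at most two elements. -/
def TwoBounded (f : Ordinal → Ordinal → Ordinal) (κ : Ordinal) : Prop :=
  ∀ ξ : Ordinal, {p : Ordinal × Ordinal | p.1 < p.2 ∧ p.2 < κ ∧ f p.1 p.2 = ξ}.encard ≤ 2

/-- `f` is `<ω`-bounded: every fiber of `f` on pairs below `κ` is finite. -/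
def FinBounded (f : Ordinal → Ordinal → Ordinal) (κ : Ordinal) : Prop :=
  ∀ ξ : Ordinal, {p : Ordinal × Ordinal | p.1 < p.2 ∧ p.2 < κ ∧ f p.1 p.2 = ξ}.Finite

/-- `f` is `ω`-bounded: every fiber of `f` on pairs below `κ` is countable. -/
def OmegaBounded (f : Ordinal → Ordinal → Ordinal) (κ : Ordinal) : Prop :=
  ∀ ξ : Ordinal, {p : Ordinal × Ordinal | p.1 < p.2 ∧ p.2 < κ ∧ f p.1 p.2 = ξ}.Countable

/-- `A` is a closed set of ordinals: any nonzero `α` below `sup A` which is the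
supremum of the elements of `A` below it belongs to `A`. -/
def IsClosedSet (A : Set Ordinal) : Prop :=
  ∀ α : Ordinal, α < sSup A → α ≠ 0 → sSup (A ∩ Set.Iio α) = α → α ∈ A

/-- `C` is club in `δ`: a subset of `δ`, unbounded in `δ`, and closed below `δ`. -/
def IsClubIn (C : Set Ordinal) (δ : Ordinal) : Prop :=
  C ⊆ Set.Iio δ ∧ (∀ α < δ, ∃ β ∈ C, α ≤ β) ∧
  ∀ α : Ordinal, α < δ → α ≠ 0 → sSup (C ∩ Set.Iio α) = α → α ∈ C

/-- `A` is stationary in `δ`: it meets every club in `δ`. -/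
def IsStationaryIn (A : Set Ordinal) (δ : Ordinal) : Prop :=
  ∀ C : Set Ordinal, IsClubIn C δ → (A ∩ C).Nonempty

/-- `f` is `<bd`-type bounded on pairs below `κ`: some `γ < bd` bounds the order
type of every color class `t_{ηβ} = {ξ < β | f ξ β = f η β}`. -/
def TypeBounded (f : Ordinal → Ordinal → Ordinal) (κ bd : Ordinal) : Prop :=
  ∃ γ < bd, ∀ η β : Ordinal, η < β → β < κ →
    OTypeLE {ξ : Ordinal | ξ < β ∧ f ξ β = f η β} γ

/-- `f` is `<bd`-type bounded relative to the set `A`. -/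
def TypeBoundedOn (f : Ordinal → Ordinal → Ordinal) (A : Set Ordinal) (bd : Ordinal) : Prop :=
  ∃ γ < bd, ∀ η ∈ A, ∀ β ∈ A, η < β →
    OTypeLE {ξ : Ordinal | ξ ∈ A ∧ ξ < β ∧ f ξ β = f η β} γ

universe v w

theorem exists_inj_Iio (c : Cardinal.{v}) (hc : ℵ₀ ≤ c) (β : Ordinal.{v}) (hβ : β.card ≤ c)
    (T : Type w) (hT : Cardinal.lift.{max w (v+1)} c ≤ Cardinal.lift.{v+1} #T) :
    ∃ e : Ordinal.{v} → Ordinal.{v} → T, ∀ a < β, ∀ b < β, ∀ a' < β, ∀ b' < β,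
      e a b = e a' b' → a = a' ∧ b = b' := by
  have h : Cardinal.lift.{w} #(Iio β × Iio β) ≤ Cardinal.lift.{v+1} #T := by
    rw [Cardinal.mk_prod, Cardinal.mk_Iio_ordinal]
    have h1 : β.card * β.card ≤ c := (mul_le_mul' hβ hβ).trans (Cardinal.mul_eq_self hc).le
    refine le_trans ?_ hT
    have h2 := Cardinal.lift_le.{max w (v+1)}.2 h1
    simp only [Cardinal.lift_lift, Cardinal.lift_mul] at h2 ⊢
    exact h2
  obtain ⟨g⟩ := Cardinal.lift_mk_le'.1 h
  have hT' : Nonempty T := by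
    rw [← Cardinal.mk_ne_zero_iff]
    intro h0
    rw [h0] at hT
    simp at hT
    rw [hT] at hc
    exact absurd hc (not_le.2 Cardinal.aleph0_pos)
  classical
  refine ⟨fun a b => if hab : a < β ∧ b < β then g (⟨a, hab.1⟩, ⟨b, hab.2⟩)
    else Classical.choice hT', ?_⟩
  intro a ha b hb a' ha' b' hb' h
  simp only [ha, hb, ha', hb', and_self, dif_pos] at h
  have := g.injective h
  exact ⟨congrArg (fun p => p.1.1) this, congrArg (fun p => p.2.1) this⟩

theorem club_inter (c : Cardinal.{v}) (hc : ℵ₀ ≤ c) (K : Type v) (hK : #K ≤ c)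
    (A : K → Set Ordinal.{v}) (hA : ∀ n, A n ⊆ Iio (Order.succ c).ord)
    (hcl : ∀ n, IsClosedSet (A n)) (hub : ∀ n, ∀ δ < (Order.succ c).ord, ∃ y ∈ A n, δ < y)
    (δ : Ordinal.{v}) (hδ : δ < (Order.succ c).ord) :
    ∃ y < (Order.succ c).ord, δ < y ∧ ∀ n, y ∈ A n := by
  have hreg := Cardinal.isRegular_succ hc
  have hlim := Cardinal.isSuccLimit_ord hreg.aleph0_le
  set θ := (Order.succ c).ord with hθ
  have : ∀ n δ, ∃ y, δ < θ → y ∈ A n ∧ δ < y := by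
    intro n δ
    by_cases h : δ < θ
    · obtain ⟨y, h1, h2⟩ := hub n δ h
      exact ⟨y, fun _ => ⟨h1, h2⟩⟩
    · exact ⟨0, fun h' => absurd h' h⟩
  choose a ha using this
  let nxt : Ordinal → Ordinal := fun δ => max (Order.succ δ) (⨆ n, a n δ)
  have hnxt : ∀ δ < θ, nxt δ < θ := by
    intro δ hδ
    refine max_lt (hlim.succ_lt hδ) ?_
    refine Ordinal.iSup_lt_of_lt_cof ?_ ?_
    · rw [hθ, hreg.cof_ord]; exact Order.lt_succ_of_le hK
    · intro n; exact hA n (ha n δ hδ).1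
  let x : ℕ → Ordinal := fun i => nxt^[i] δ
  have hx0 : x 0 = δ := rfl
  have hxs : ∀ i, x (i+1) = nxt (x i) := fun i => Function.iterate_succ_apply' _ _ _
  have hx : ∀ i, x i < θ := by
    intro i
    induction i with
    | zero => exact hδ
    | succ i ih => rw [hxs]; exact hnxt _ ih
  have hlt : ∀ i, x i < x (i+1) := by
    intro i
    rw [hxs]; exact (Order.lt_succ _).trans_le (le_max_left _ _)
  have hL : (⨆ i, x i) < θ := by
    refine Ordinal.lift_iSup_lt_of_lt_cof ?_ hx
    rw [← Ordinal.lift_cof, hθ, hreg.cof_ord]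
    simpa using Order.lt_succ_of_le hc
  have hxL : ∀ i, x i < ⨆ i, x i := fun i => (hlt i).trans_le (Ordinal.le_iSup x _)
  refine ⟨⨆ i, x i, hL, hxL 0, fun n => ?_⟩
  obtain ⟨y, hy, hy2⟩ := hub n _ hL
  have hbd : BddAbove (A n) := ⟨θ, fun z hz => (hA n hz).le⟩
  refine hcl n _ (hy2.trans_le (le_csSup hbd hy)) ?_ ?_
  · exact (bot_le.trans_lt (hxL 0)).ne'
  · apply le_antisymm
    · exact csSup_le' fun z hz => hz.2.le
    · refine Ordinal.iSup_le fun i => ?_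
      have h1 := ha n (x i) (hx i)
      refine h1.2.le.trans (le_csSup ⟨θ, fun z hz => (hA n hz.1).le⟩ ⟨h1.1, ?_⟩)
      refine lt_of_le_of_lt ?_ (hxL (i+1))
      rw [hxs]
      exact (Ordinal.le_iSup (fun n => a n (x i)) n).trans (le_max_right _ _)

theorem unbounded_of_otype (θ : Ordinal.{v}) (hθ : Order.IsSuccLimit θ) (A : Set Ordinal.{v})
    (hA : A ⊆ Iio θ) (h : HasOType A θ) : ∀ δ < θ, ∃ y ∈ A, δ < y := by
  obtain ⟨g⟩ := h
  intro δ hδ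
  let g' : Iio θ → Iio θ := fun x => ⟨g x, hA (g x).2⟩
  have hg : StrictMono g' := fun x y hxy => g.strictMono hxy
  have := hg.le_apply (x := ⟨Order.succ δ, hθ.succ_lt hδ⟩)
  refine ⟨_, (g ⟨Order.succ δ, hθ.succ_lt hδ⟩).2, ?_⟩
  exact (Order.lt_succ δ).trans_le this

/-- For every infinite cardinal `κ`, `κ⁺ ↛^poly (κ⁺-cl)²_{2-bdd}`: there is a normal
2-bounded coloring `f : [κ⁺]² → κ⁺` with no closed `f`-rainbow subset of order type `κ⁺`. -/
theorem stmt0 (κ : Cardinal) (hκ : ℵ₀ ≤ κ) :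
    ∃ f : Ordinal → Ordinal → Ordinal,
      (∀ α β : Ordinal, α < β → β < (Order.succ κ).ord → f α β < (Order.succ κ).ord) ∧
      IsNormalColoring f (Order.succ κ).ord ∧
      TwoBounded f (Order.succ κ).ord ∧
      ∀ A : Set Ordinal, A ⊆ Set.Iio (Order.succ κ).ord → IsClosedSet A →
        HasOType A (Order.succ κ).ord → ¬ IsRainbow f A := by
  have hreg := Cardinal.isRegular_succ hκ
  have hlim := Cardinal.isSuccLimit_ord hreg.aleph0_le
  set θ := (Order.succ κ).ord with hθ
  obtain ⟨P', hP'⟩ := exists_inj_Iio (Order.succ κ) hreg.aleph0_le (Order.succ κ).ord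
    (by simp) (Iio (Order.succ κ).ord) (by simp [Cardinal.mk_Iio_ordinal])
  have he : ∀ β : Ordinal, ∃ e : Ordinal → Ordinal → κ.out, β < (Order.succ κ).ord →
      ∀ a < β, ∀ b < β, ∀ a' < β, ∀ b' < β, e a b = e a' b' → a = a' ∧ b = b' := by
    intro β
    by_cases hβ : β < (Order.succ κ).ord
    · obtain ⟨e, he⟩ := exists_inj_Iio κ hκ β (Order.lt_succ_iff.1 (Cardinal.lt_ord.1 hβ))
        κ.out (by simp)
      exact ⟨e, fun _ => he⟩
    · have : Nonempty κ.out := by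
        rw [← Cardinal.mk_ne_zero_iff, Cardinal.mk_out]
        exact (Cardinal.aleph0_pos.trans_le hκ).ne'
      exact ⟨fun _ _ => Classical.choice this, fun h => absurd h hβ⟩
  choose e he using he
  classical
  let rep : κ.out → Ordinal → Ordinal → Ordinal := fun n α β =>
    if h : ∃ α' < α, e β α' α = n then h.choose else α
  have hrep : ∀ n α β, rep n α β = α ∨ (rep n α β < α ∧ e β (rep n α β) α = n) := by
    intro n α β
    by_cases h : ∃ α' < α, e β α' α = n
    · right
      simp only [rep, dif_pos h]
      exact h.choose_spec
    · left; simp only [rep, dif_neg h]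
  have hreple : ∀ n α β, rep n α β ≤ α := by
    intro n α β
    rcases hrep n α β with h | h
    · exact h.le
    · exact h.1.le
  let f : κ.out → Ordinal → Ordinal → Ordinal := fun n α β => P' β (rep n α β)
  have hf : ∀ n α β γ δ, α < β → β < θ → γ < δ → δ < θ → f n α β = f n γ δ →
      β = δ ∧ rep n α β = rep n γ δ := by
    intro n α β γ δ h1 h2 h3 h4 h5
    exact hP' _ h2 _ ((hreple _ _ _).trans_lt (h1.trans h2)) _ h4 _
      ((hreple _ _ _).trans_lt (h3.trans h4)) (Subtype.ext h5)
  by_contra hcon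
  push Not at hcon
  have key : ∀ n, ∃ A : Set Ordinal, A ⊆ Iio θ ∧ IsClosedSet A ∧ HasOType A θ ∧
      IsRainbow (f n) A := by
    intro n
    refine hcon (f n) ?_ ?_ ?_
    · intro α β _ _
      exact (P' β (rep n α β)).2
    · intro α β γ δ h1 h2 h3 h4 h5
      exact (hf n α β γ δ h1 h2 h3 h4 h5).1
    · intro ξ
      by_contra hlt
      have h3le : (3 : ℕ∞) ≤ _ := Order.add_one_le_of_lt (not_le.1 hlt)
      obtain ⟨s, hs, hs3⟩ := Set.exists_subset_encard_eq h3le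
      obtain ⟨⟨a, b⟩, ⟨a', b'⟩, ⟨a'', b''⟩, n1, n2, n3, rfl⟩ := Set.encard_eq_three.1 hs3
      obtain ⟨h1, h2, h3⟩ := hs (show (a, b) ∈ _ by simp)
      obtain ⟨h1', h2', h3'⟩ := hs (show (a', b') ∈ _ by simp)
      obtain ⟨h1'', h2'', h3''⟩ := hs (show (a'', b'') ∈ _ by simp)
      clear hs hs3 h3le hlt
      dsimp only at *
      obtain ⟨rfl, r1⟩ := hf n _ _ _ _ h1 h2 h1' h2' (h3.trans h3'.symm)
      obtain ⟨rfl, r2⟩ := hf n _ _ _ _ h1 h2 h1'' h2'' (h3.trans h3''.symm)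
      have inj : ∀ u v, u < b → v < b → rep n u b = rep n v b → rep n u b < u →
          rep n v b < v → u = v := by
        intro u v hu hv huv h h'
        have p := (hrep n u b).resolve_left h.ne
        have q := (hrep n v b).resolve_left h'.ne
        exact (he b h2 _ (h.trans hu) _ hu _ (h'.trans hv) _ hv (p.2.trans q.2.symm)).2
      have ne1 : a ≠ a' := fun h => n1 (by rw [h])
      have ne2 : a ≠ a'' := fun h => n2 (by rw [h])
      have ne3 : a' ≠ a'' := fun h => n3 (by rw [h])
      have i1 := inj a a' h1 h1' r1
      have i2 := inj a a'' h1 h1'' r2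
      have i3 := inj a' a'' h1' h1'' (r1.symm.trans r2)
      rcases hrep n a b with q | q <;> rcases hrep n a' b with q' | q' <;>
        rcases hrep n a'' b with q'' | q'' <;> grind
  choose A hA hcl hot hrb using key
  have hub : ∀ n, ∀ δ < θ, ∃ y ∈ A n, δ < y := fun n =>
    unbounded_of_otype θ hlim (A n) (hA n) (hot n)
  have hint := club_inter κ hκ κ.out (by simp) A hA hcl hub
  obtain ⟨α, hα, -, hαA⟩ := hint 0 hreg.ord_pos
  obtain ⟨γ, hγ, hαγ, hγA⟩ := hint α hα
  obtain ⟨β, hβ, hγβ, hβA⟩ := hint γ hγ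
  have hαβ := hαγ.trans hγβ
  let n := e β α γ
  have r1 : rep n α β = α := by
    refine (hrep n α β).resolve_right fun ⟨h1, h2⟩ => ?_
    exact hαγ.ne (he β hβ _ (h1.trans hαβ) _ hαβ _ hαβ _ hγβ h2).2
  have r2 : rep n γ β = α := by
    have hex : ∃ α' < γ, e β α' γ = n := ⟨α, hαγ, rfl⟩
    have h1 : rep n γ β = hex.choose := by simp only [rep, dif_pos hex]
    rw [h1]
    exact (he β hβ _ (hex.choose_spec.1.trans hγβ) _ hγβ _ hαβ _ hγβ hex.choose_spec.2).1
  have := hrb n α (hαA n) β (hβA n) γ (hγA n) β (hβA n) hαβ hγβ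
    (by simp only [f, r1, r2])
  exact hαγ.ne this.1
end

section
/- For every regular cardinal κ ≥ ω₂, the relation κ ↛^poly (κ-cl)²_{2-bdd} holds; that is, there exists a normal 2-bounded coloring f : [κ]² → κ such that no closed subset of κ of order type κ is f-rainbow. -/
open Set Cardinal Ordinal

universe u

/-- Unbounded closed subset of `κ`, in terms of suprema of nonempty subsets. -/
structure Clb (κ : Ordinal.{u}) (E : Set Ordinal.{u}) : Prop where
  lt : ∀ x ∈ E, x < κ
  unb : ∀ α < κ, ∃ β ∈ E, α < β
  cl : ∀ S ⊆ E, S.Nonempty → sSup S < κ → sSup S ∈ E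

theorem nat_iSup_lt {κ : Cardinal.{u}} (hreg : κ.IsRegular) (h : ℵ₀ < κ) (f : ℕ → Ordinal.{u})
    (hf : ∀ n, f n < κ.ord) : ⨆ n, f n < κ.ord := by
  apply Ordinal.lift_iSup_lt_of_lt_cof _ hf
  simpa [hreg.cof_ord] using h

theorem Iio_bd {κ : Cardinal.{u}} (hreg : κ.IsRegular) (i : Ordinal.{u}) (h : i.card < κ)
    (f : Ordinal.{u} → Ordinal.{u}) (hf : ∀ j < i, f j < κ.ord) :
    ∃ b < κ.ord, ∀ j < i, f j ≤ b := by
  refine ⟨⨆ j : Iio i, f j, ?_, ?_⟩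
  · refine Ordinal.lift_iSup_lt_of_lt_cof (f := fun j : Iio i => f j.1) ?_ (fun j => hf j.1 j.2)
    rw [← Ordinal.lift_cof, hreg.cof_ord, Cardinal.mk_Iio_ordinal, Cardinal.lift_lift,
      Cardinal.lift_lt]
    exact h
  · intro j hj
    exact Ordinal.le_iSup (fun j : Iio i => f j) ⟨j, hj⟩

theorem Clb.inter {κ : Cardinal.{u}} (hreg : κ.IsRegular) (h0 : ℵ₀ < κ) (i : Ordinal.{u})
    (h : i.card < κ) (F : Ordinal.{u} → Set Ordinal.{u}) (hF : ∀ j < i, Clb κ.ord (F j)) :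
    Clb κ.ord {x | x < κ.ord ∧ ∀ j < i, x ∈ F j} := by
  refine ⟨fun x hx => hx.1, ?_, ?_⟩
  · intro α hα
    have hlim : Order.IsSuccLimit κ.ord := isSuccLimit_ord hreg.aleph0_le
    have h1 : ∀ j x, ∃ y, j < i → x < κ.ord → y ∈ F j ∧ x < y := by
      intro j x
      by_cases hj : j < i ∧ x < κ.ord
      · obtain ⟨y, hy⟩ := (hF j hj.1).unb x hj.2
        exact ⟨y, fun _ _ => hy⟩
      · exact ⟨0, fun h1 h2 => (hj ⟨h1, h2⟩).elim⟩
    choose nxt hnxt using h1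
    have h2 : ∀ x : Iio κ.ord, ∃ b : Iio κ.ord, x.1 < b.1 ∧ ∀ j < i, nxt j x ≤ b := by
      rintro ⟨x, hx⟩
      obtain ⟨b, hb, hb'⟩ := Iio_bd hreg i h (fun j => nxt j x)
        (fun j hj => (hF j hj).lt _ (hnxt j x hj hx).1)
      refine ⟨⟨max b (Order.succ x), max_lt hb (hlim.succ_lt hx)⟩, ?_, ?_⟩
      · exact lt_max_of_lt_right (Order.lt_succ x)
      · exact fun j hj => le_max_of_le_left (hb' j hj)
    choose st hst1 hst2 using h2
    let a : ℕ → Iio κ.ord := fun n => st^[n] ⟨α, hα⟩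
    have ha : ∀ n, a (n+1) = st (a n) := fun n => Function.iterate_succ_apply' _ _ _
    have hδ : ⨆ n, (a n).1 < κ.ord := nat_iSup_lt hreg h0 _ (fun n => (a n).2)
    have hle : ∀ n, (a n).1 ≤ ⨆ n, (a n).1 := fun n => Ordinal.le_iSup (fun n => (a n).1) n
    refine ⟨⨆ n, (a n).1, ⟨hδ, ?_⟩, ?_⟩
    · intro j hj
      have key : sSup (range fun n => nxt j (a n).1) = ⨆ n, (a n).1 := by
        apply le_antisymm
        · apply csSup_le (range_nonempty _)
          rintro _ ⟨n, rfl⟩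
          refine (hst2 (a n) j hj).trans ?_
          rw [← ha]; exact hle _
        · apply Ordinal.iSup_le
          intro n
          exact (hnxt j _ hj (a n).2).2.le.trans
            (Ordinal.le_iSup (fun n => nxt j (a n).1) n)
      rw [← key]
      apply (hF j hj).cl
      · rintro _ ⟨n, rfl⟩
        exact (hnxt j _ hj (a n).2).1
      · exact range_nonempty _
      · rw [key]; exact hδ
    · calc α < (st (a 0)).1 := hst1 (a 0)
        _ = (a 1).1 := by rw [ha]
        _ ≤ _ := hle 1
  · intro S hS hne hlt
    exact ⟨hlt, fun j hj => (hF j hj).cl S (fun x hx => (hS hx).2 j hj) hne hlt⟩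

/-- `c` is a countable sequence cofinal in `δ`. -/
def Cofl (c : ℕ → Ordinal.{u}) (δ : Ordinal.{u}) : Prop :=
  (∀ n, c n < δ) ∧ ∀ β < δ, ∃ n, β < c n

/-- The iteration of clubs. -/
noncomputable def itE (κ : Ordinal.{u}) (D : Set Ordinal.{u} → Set Ordinal.{u})
    (i : Ordinal.{u}) : Set Ordinal.{u} :=
  {x | x < κ ∧ ∀ j, ∀ _ : j < i, x ∈ D (itE κ D j)}
termination_by i

theorem sSup_Iic_le (E : Set Ordinal.{u}) (x : Ordinal.{u}) : sSup (E ∩ Iic x) ≤ x :=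
  csSup_le' fun _ hy => hy.2

theorem guess {κ : Cardinal.{u}} (hreg : κ.IsRegular) (hκ : Cardinal.aleph 2 ≤ κ)
    (c : Ordinal.{u} → ℕ → Ordinal.{u})
    (hc : ∀ δ, (∃ s, Cofl s δ) → Cofl (c δ) δ) :
    ∃ E, Clb κ.ord E ∧ ∀ D, Clb κ.ord D → ∃ δ ∈ D, Cofl (c δ) δ ∧
      (∀ β < δ, ∃ x ∈ E, β < x ∧ x < δ) ∧
      ∀ n, sSup (E ∩ Iic (c δ n)) ≠ 0 → sSup (E ∩ Iic (c δ n)) ∈ D := by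
  by_contra hcon
  push Not at hcon
  have h1 : ∀ E, ∃ D, Clb κ.ord E → Clb κ.ord D ∧ ∀ δ ∈ D, Cofl (c δ) δ →
      (∀ β < δ, ∃ x ∈ E, β < x ∧ x < δ) →
      ∃ n, sSup (E ∩ Iic (c δ n)) ≠ 0 ∧ sSup (E ∩ Iic (c δ n)) ∉ D := by
    intro E
    by_cases hE : Clb κ.ord E
    · obtain ⟨D, hD⟩ := hcon E hE
      exact ⟨D, fun _ => hD⟩
    · exact ⟨∅, fun h => (hE h).elim⟩
  choose D hD using h1
  have hk1 : ℵ_ 1 < κ := lt_of_lt_of_le (aleph_lt_aleph.2 (by norm_num)) hκ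
  have h0 : ℵ₀ < κ := lt_of_le_of_lt (aleph0_le_aleph 1) hk1
  have h01 : ℵ₀ < ℵ_ (1 : Ordinal.{u}) := aleph0_lt_aleph_one
  have hreg1 : (ℵ_ (1 : Ordinal.{u})).IsRegular := isRegular_aleph_one
  let W : Ordinal.{u} := (ℵ_ 1).ord
  have hWlim : Order.IsSuccLimit W := isSuccLimit_ord hreg1.aleph0_le
  let E := itE κ.ord D
  have hEeq : ∀ i, E i = {x | x < κ.ord ∧ ∀ j < i, x ∈ D (E j)} := by
    intro i
    change itE κ.ord D i = _
    rw [itE]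
  have hE : ∀ i < W, Clb κ.ord (E i) := by
    intro i
    induction i using WellFoundedLT.induction with
    | _ i ih =>
      intro hi
      rw [hEeq]
      apply Clb.inter hreg h0 i ((lt_ord.1 hi).trans hk1)
      intro j hj
      exact (hD _ (ih j hj (hj.trans hi))).1
  have hanti : ∀ i j, i ≤ j → E j ⊆ E i := by
    intro i j hij x hx
    rw [hEeq] at hx ⊢
    exact ⟨hx.1, fun k hk => hx.2 k (hk.trans_le hij)⟩
  have hI := Clb.inter hreg h0 W (by simpa [W] using hk1) E hE
  set I := {x | x < κ.ord ∧ ∀ j < W, x ∈ E j} with hIdef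
  -- an increasing sequence in the intersection
  have h3 : ∀ x : Iio κ.ord, ∃ y : Iio κ.ord, y.1 ∈ I ∧ x.1 < y.1 := by
    rintro ⟨x, hx⟩
    obtain ⟨y, hy, hxy⟩ := hI.unb x hx
    exact ⟨⟨y, hI.lt y hy⟩, hy, hxy⟩
  choose nx hnx1 hnx2 using h3
  let a : ℕ → Iio κ.ord := fun n => nx^[n+1] ⟨0, hreg.ord_pos⟩
  have ha : ∀ n, a (n+1) = nx (a n) := fun n => Function.iterate_succ_apply' _ _ _
  have haI : ∀ n, (a n).1 ∈ I := by
    intro n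
    have : a n = nx (nx^[n] ⟨0, hreg.ord_pos⟩) := Function.iterate_succ_apply' _ _ _
    rw [this]; exact hnx1 _
  let δ := ⨆ n, (a n).1
  have hδ : δ < κ.ord := nat_iSup_lt hreg h0 _ (fun n => (a n).2)
  have hle : ∀ n, (a n).1 ≤ δ := fun n => Ordinal.le_iSup (fun n => (a n).1) n
  have hlt : ∀ n, (a n).1 < δ := by
    intro n
    refine lt_of_lt_of_le (hnx2 (a n)) ?_
    rw [← ha]; exact hle _
  have hcof : Cofl (fun n => (a n).1) δ := by
    refine ⟨hlt, fun β hβ => ?_⟩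
    exact Ordinal.lt_iSup_iff.1 hβ
  have hδI : δ ∈ I := by
    apply hI.cl (range fun n => (a n).1) _ (range_nonempty _) hδ
    rintro _ ⟨n, rfl⟩
    exact haI n
  have hcδ := hc δ ⟨_, hcof⟩
  let g : Ordinal.{u} → ℕ → Ordinal.{u} := fun i n => sSup (E i ∩ Iic (c δ n))
  have hg : ∀ n i j, i ≤ j → g j n ≤ g i n := by
    intro n i j hij
    apply csSup_le_csSup' ⟨c δ n, fun y hy => hy.2⟩
    exact inter_subset_inter_left _ (hanti i j hij)
  have hstab : ∀ n, ∃ i < W, ∀ j < W, i ≤ j → g j n = g i n := by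
    intro n
    have hne : ((fun i => g i n) '' Iio W).Nonempty :=
      ⟨g 0 n, 0, hreg1.ord_pos, rfl⟩
    obtain ⟨i, hi, hieq⟩ := csInf_mem hne
    refine ⟨i, hi, fun j hj hij => le_antisymm (hg n i j hij) ?_⟩
    change g i n = _ at hieq
    rw [hieq]
    exact csInf_le' (mem_image_of_mem (fun i => g i n) hj)
  choose s hsW hs using hstab
  let i := ⨆ n, s n
  have hi : i < W := nat_iSup_lt hreg1 h01 s hsW
  have hi' : Order.succ i < W := hWlim.succ_lt hi
  have hsi : ∀ n, s n ≤ i := fun n => Ordinal.le_iSup s n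
  have hgi : ∀ n, g (Order.succ i) n = g i n := by
    intro n
    rw [hs n _ hi' ((hsi n).trans (Order.le_succ i)), hs n i hi (hsi n)]
  have hsub : E (Order.succ i) ⊆ D (E i) := by
    intro x hx
    rw [hEeq] at hx
    exact hx.2 i (Order.lt_succ i)
  obtain ⟨n, hn0, hn⟩ := (hD (E i) (hE i hi)).2 δ (hsub (hδI.2 _ hi')) hcδ (by
    intro β hβ
    obtain ⟨n, hn⟩ := hcof.2 β hβ
    exact ⟨(a n).1, (haI n).2 i hi, hn, hlt n⟩)
  apply hn
  change g i n ∈ _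
  change g i n ≠ 0 at hn0
  rw [← hgi] at hn0 ⊢
  apply hsub
  apply (hE _ hi').cl _ inter_subset_left
  · by_contra hemp
    rw [not_nonempty_iff_eq_empty] at hemp
    apply hn0
    change sSup (E (Order.succ i) ∩ Iic (c δ n)) = 0
    rw [hemp]; simp
  · exact (sSup_Iic_le _ _).trans_lt ((hcδ.1 n).trans hδ)

theorem clb_of_closed {κ : Cardinal.{u}} (A : Set Ordinal.{u})
    (hA : A ⊆ Iio κ.ord) (hcl : IsClosedSet A) (hot : HasOType A κ.ord)
    (hlim : Order.IsSuccLimit κ.ord) : Clb κ.ord A := by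
  obtain ⟨e⟩ := hot
  have hge : ∀ x : Ordinal.{u}, ∀ hx : x < κ.ord, x ≤ (e ⟨x, hx⟩).1 := by
    intro x
    induction x using WellFoundedLT.induction with
    | _ x ih =>
      intro hx
      by_contra hlt
      rw [not_le] at hlt
      have h1 := ih _ hlt (hlt.trans hx)
      have h2 : e ⟨(e ⟨x, hx⟩).1, hlt.trans hx⟩ < e ⟨x, hx⟩ := e.lt_iff_lt.2 hlt
      exact absurd h2 (not_lt.2 h1)
  have hunb : ∀ α < κ.ord, ∃ β ∈ A, α < β := by
    intro α hα
    have hα' := hlim.succ_lt hα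
    exact ⟨_, (e ⟨_, hα'⟩).2, (Order.lt_succ α).trans_le (hge _ hα')⟩
  have hbdd : BddAbove A := ⟨κ.ord, fun x hx => (hA hx).le⟩
  refine ⟨fun x hx => hA hx, hunb, ?_⟩
  intro S hS hne hlt
  have hbS : BddAbove S := hbdd.mono hS
  by_cases hmem : sSup S ∈ S
  · exact hS hmem
  have hSlt : ∀ x ∈ S, x < sSup S := fun x hx =>
    lt_of_le_of_ne (le_csSup hbS hx) (fun h => hmem (h ▸ hx))
  apply hcl
  · obtain ⟨β, hβ, h⟩ := hunb _ hlt
    exact h.trans_le (le_csSup hbdd hβ)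
  · obtain ⟨x, hx⟩ := hne
    exact ((zero_le).trans_lt (hSlt x hx)).ne'
  · apply le_antisymm
    · exact csSup_le' fun y hy => le_of_lt hy.2
    · exact csSup_le_csSup' (hbdd.mono inter_subset_left) fun x hx => ⟨hS hx, hSlt x hx⟩

theorem exists_pairing {κ : Cardinal.{u}} (h0 : ℵ₀ ≤ κ) :
    ∃ h : Ordinal.{u} → Ordinal.{u} → Ordinal.{u},
      (∀ α < κ.ord, ∀ β < κ.ord, h α β < κ.ord) ∧
      ∀ α < κ.ord, ∀ β < κ.ord, ∀ γ < κ.ord, ∀ δ < κ.ord, h α β = h γ δ → α = γ ∧ β = δ := by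
  have hc : #(Iio κ.ord × Iio κ.ord) = #(Iio κ.ord) := by
    rw [mk_prod, Cardinal.lift_id]
    apply Cardinal.mul_eq_self
    rw [Cardinal.mk_Iio_ordinal]
    simpa using h0
  obtain ⟨e⟩ := Cardinal.eq.1 hc
  classical
  refine ⟨fun α β => if H : α < κ.ord ∧ β < κ.ord then (e (⟨α, H.1⟩, ⟨β, H.2⟩)).1 else 0, ?_, ?_⟩
  · intro α hα β hβ
    simp only [hα, hβ, and_self, dite_true]
    exact (e _).2
  · intro α hα β hβ γ hγ δ hδ h
    simp only [hα, hβ, hγ, hδ, and_self, dite_true] at h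
    have := e.injective (Subtype.ext h)
    rw [Prod.mk.injEq] at this
    exact ⟨congrArg Subtype.val this.1, congrArg Subtype.val this.2⟩

theorem stmt1 (κ : Cardinal) (hreg : κ.IsRegular) (hκ : Cardinal.aleph 2 ≤ κ) :
    ∃ f : Ordinal → Ordinal → Ordinal,
      (∀ α β : Ordinal, α < β → β < κ.ord → f α β < κ.ord) ∧
      IsNormalColoring f κ.ord ∧
      TwoBounded f κ.ord ∧
      ∀ A : Set Ordinal, A ⊆ Set.Iio κ.ord → IsClosedSet A →
        HasOType A κ.ord → ¬ IsRainbow f A := by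
  classical
  have hlim : Order.IsSuccLimit κ.ord := isSuccLimit_ord hreg.aleph0_le
  have hc0 : ∀ δ : Ordinal, ∃ s : ℕ → Ordinal, (∃ s, Cofl s δ) → Cofl s δ := by
    intro δ
    by_cases h : ∃ s, Cofl s δ
    · exact ⟨h.choose, fun _ => h.choose_spec⟩
    · exact ⟨fun _ => 0, fun h' => (h h').elim⟩
  choose c hc using hc0
  obtain ⟨E, hE, hguess⟩ := guess hreg hκ c hc
  have hab : ∀ δ : Ordinal, ∃ p : Ordinal × Ordinal, p.1 ≤ p.2 ∧
      (Cofl (c δ) δ → (∀ β < δ, ∃ x ∈ E, β < x ∧ x < δ) → 0 < δ →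
        p.1 < p.2 ∧ p.2 < δ ∧ 0 < p.1 ∧
        (∃ n, p.1 = sSup (E ∩ Iic (c δ n))) ∧ (∃ n, p.2 = sSup (E ∩ Iic (c δ n)))) := by
    intro δ
    by_cases h : Cofl (c δ) δ ∧ (∀ β < δ, ∃ x ∈ E, β < x ∧ x < δ) ∧ 0 < δ
    · obtain ⟨h1, h2, h3⟩ := h
      have key : ∀ β < δ, ∃ n, β < sSup (E ∩ Iic (c δ n)) := by
        intro β hβ
        obtain ⟨x, hx, hβx, hxδ⟩ := h2 β hβ
        obtain ⟨n, hn⟩ := h1.2 x hxδ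
        exact ⟨n, hβx.trans_le (le_csSup ⟨c δ n, fun y hy => hy.2⟩ ⟨hx, hn.le⟩)⟩
      obtain ⟨n, hn⟩ := key 0 h3
      obtain ⟨m, hm⟩ := key _ ((sSup_Iic_le E (c δ n)).trans_lt (h1.1 n))
      exact ⟨(_, _), hm.le, fun _ _ _ =>
        ⟨hm, (sSup_Iic_le E (c δ m)).trans_lt (h1.1 m), hn, ⟨n, rfl⟩, ⟨m, rfl⟩⟩⟩
    · exact ⟨(0, 0), le_rfl, fun h1 h2 h3 => (h ⟨h1, h2, h3⟩).elim⟩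
  choose p hp1 hp2 using hab
  obtain ⟨h, hh1, hh2⟩ := exists_pairing hreg.aleph0_le
  let r : Ordinal → Ordinal → Ordinal := fun α β => if α = (p β).2 then (p β).1 else α
  have hr : ∀ α β, r α β ≤ α := by
    intro α β
    by_cases hα : α = (p β).2
    · simp only [r, hα, if_true]; exact hp1 β
    · simp [r, hα]
  have hrk : ∀ α β, α < β → β < κ.ord → r α β < κ.ord := fun α β h1 h2 =>
    (hr α β).trans_lt (h1.trans h2)
  refine ⟨fun α β => h (r α β) β, ?_, ?_, ?_, ?_⟩
  · intro α β h1 h2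
    exact hh1 _ (hrk α β h1 h2) _ h2
  · intro α β γ δ h1 h2 h3 h4 heq
    exact (hh2 _ (hrk α β h1 h2) _ h2 _ (hrk γ δ h3 h4) _ h4 heq).2
  · intro ξ
    rcases Set.eq_empty_or_nonempty
      {p : Ordinal × Ordinal | p.1 < p.2 ∧ p.2 < κ.ord ∧ h (r p.1 p.2) p.2 = ξ} with he | ⟨q, hq⟩
    · rw [he]; simp
    · refine (Set.encard_le_encard (t := {(r q.1 q.2, q.2), ((p q.2).2, q.2)}) ?_).trans
        ((Set.encard_insert_le _ _).trans (by rw [Set.encard_singleton]; norm_num))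
      rintro ⟨α, β⟩ ⟨h1, h2, h3⟩
      obtain ⟨q1, q2, q3⟩ := hq
      obtain ⟨e1, e2⟩ := hh2 _ (hrk _ _ h1 h2) _ h2 _ (hrk _ _ q1 q2) _ q2 (h3.trans q3.symm)
      simp only at e1 e2
      subst e2
      by_cases hα : α = (p q.2).2
      · right; simp [hα]
      · left
        rw [← e1]
        simp [r, hα]
  · intro A hA hcl hot hrb
    have hAc := clb_of_closed A hA hcl hot hlim
    -- remove `0` from `A`
    have hAc' : Clb κ.ord {x | x ∈ A ∧ 0 < x} := by
      refine ⟨fun x hx => hA hx.1, ?_, ?_⟩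
      · intro α hα
        obtain ⟨β, hβ, h⟩ := hAc.unb α hα
        exact ⟨β, ⟨hβ, (zero_le).trans_lt h⟩, h⟩
      · intro S hS hne hlt
        refine ⟨hAc.cl S (fun x hx => (hS hx).1) hne hlt, ?_⟩
        obtain ⟨x, hx⟩ := hne
        exact (hS hx).2.trans_le (le_csSup ⟨κ.ord, fun y hy => (hA (hS hy).1).le⟩ hx)
    obtain ⟨δ, hδ, hcf, hEδ, hg⟩ := hguess _ hAc'
    obtain ⟨h1, h2, h3, ⟨n, hn⟩, ⟨m, hm⟩⟩ := hp2 δ hcf hEδ hδ.2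
    have ha : (p δ).1 ∈ A := by
      rw [hn]
      refine (hg n ?_).1
      rw [← hn]; exact h3.ne'
    have hb : (p δ).2 ∈ A := by
      rw [hm]
      refine (hg m ?_).1
      rw [← hm]; exact (h3.trans h1).ne'
    have := hrb _ ha δ hδ.1 _ hb δ hδ.1 (h1.trans h2) h2 (by simp [r])
    exact h1.ne this.1
end

section
/- Let κ be a regular uncountable cardinal and suppose there exists a club-guessing sequence on S^κ_ω. Then there exists a normal 2-bounded coloring f : [κ]² → κ such that no club subset of κ is f-rainbow; in particular κ ↛^poly (κ-cl)²_{2-bdd}. -/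
open Set Cardinal Ordinal

universe u

/-- If `κ` is regular uncountable and there is a club-guessing sequence on
`S^κ_ω = {δ < κ | cf δ = ω}`, then there is a normal 2-bounded coloring on `[κ]²`
such that no club subset of `κ` is rainbow; in particular no closed subset of
order type `κ` is rainbow, i.e. `κ ↛^poly (κ-cl)²_{2-bdd}`. -/
theorem stmt2 (κ : Cardinal) (hreg : κ.IsRegular) (huncount : ℵ₀ < κ)
    (hguess : ∃ C : Ordinal → Set Ordinal,
      (∀ δ : Ordinal, δ < κ.ord → δ.cof = ℵ₀ →
        C δ ⊆ Set.Iio δ ∧ (∀ α < δ, ∃ β ∈ C δ, α ≤ β) ∧ HasOType (C δ) Ordinal.omega0) ∧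
      ∀ D : Set Ordinal, IsClubIn D κ.ord →
        ∃ δ : Ordinal, δ < κ.ord ∧ δ.cof = ℵ₀ ∧ C δ ⊆ D) :
    ∃ f : Ordinal → Ordinal → Ordinal,
      (∀ α β : Ordinal, α < β → β < κ.ord → f α β < κ.ord) ∧
      IsNormalColoring f κ.ord ∧
      TwoBounded f κ.ord ∧
      (∀ D : Set Ordinal, IsClubIn D κ.ord → ¬ IsRainbow f D) ∧
      ∀ A : Set Ordinal, A ⊆ Set.Iio κ.ord → IsClosedSet A →
        HasOType A κ.ord → ¬ IsRainbow f A := by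
  classical
  obtain ⟨C, hC, hG⟩ := hguess
  -- an injective pairing function on `κ.ord`
  have hpair : ∃ p : Set.Iio κ.ord × Set.Iio κ.ord → Set.Iio κ.ord, Function.Injective p := by
    have hle : #(Set.Iio κ.ord × Set.Iio κ.ord) ≤ #(Set.Iio κ.ord) := by
      rw [Cardinal.mk_prod, Cardinal.mk_Iio_ordinal]
      simp only [Cardinal.card_ord, Cardinal.lift_id]
      exact (Cardinal.mul_eq_self (by simpa using huncount.le)).le
    obtain ⟨e⟩ := hle
    exact ⟨e, e.injective⟩
  obtain ⟨p, hp⟩ := hpair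
  -- the first two points of each ladder
  have hab : ∀ δ : Ordinal, ∃ ab : Ordinal × Ordinal, δ < κ.ord → δ.cof = ℵ₀ →
      ab.1 ∈ C δ ∧ ab.2 ∈ C δ ∧ ab.1 < ab.2 := by
    intro δ
    by_cases h : δ < κ.ord ∧ δ.cof = ℵ₀
    · obtain ⟨-, -, ⟨e⟩⟩ := hC δ h.1 h.2
      refine ⟨((e ⟨0, Ordinal.omega0_pos⟩ : Ordinal), (e ⟨1, Ordinal.one_lt_omega0⟩ : Ordinal)),
        fun _ _ => ⟨(e _).2, (e _).2, ?_⟩⟩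
      have : e ⟨0, Ordinal.omega0_pos⟩ < e ⟨1, Ordinal.one_lt_omega0⟩ := by
        rw [e.lt_iff_lt]
        exact Subtype.mk_lt_mk.2 zero_lt_one
      exact this
    · exact ⟨(0, 0), fun h1 h2 => absurd ⟨h1, h2⟩ h⟩
  choose ab hab using hab
  let g : Ordinal → Ordinal → Ordinal := fun ξ δ =>
    if ξ = (ab δ).2 ∧ (ab δ).1 < (ab δ).2 then (ab δ).1 else ξ
  have hg_le : ∀ ξ δ, g ξ δ ≤ ξ := by
    intro ξ δ
    simp only [g]
    split_ifs with h
    · exact h.1 ▸ h.2.le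
    · exact le_rfl
  let f : Ordinal → Ordinal → Ordinal := fun ξ δ =>
    if h : g ξ δ < κ.ord ∧ δ < κ.ord then (p (⟨g ξ δ, h.1⟩, ⟨δ, h.2⟩) : Ordinal) else 0
  have hf : ∀ α β (h : α < β) (h' : β < κ.ord),
      f α β = (p (⟨g α β, (hg_le α β).trans_lt (h.trans h')⟩, ⟨β, h'⟩) : Ordinal) := by
    intro α β h h'
    simp only [f]
    rw [dif_pos ⟨(hg_le α β).trans_lt (h.trans h'), h'⟩]
  have hfinj : ∀ α β γ δ, α < β → β < κ.ord → γ < δ → δ < κ.ord → f α β = f γ δ →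
      g α β = g γ δ ∧ β = δ := by
    intro α β γ δ h1 h2 h3 h4 h
    rw [hf α β h1 h2, hf γ δ h3 h4] at h
    have := hp (Subtype.ext h)
    exact ⟨congrArg (fun x => (x.1 : Ordinal)) this, congrArg (fun x => (x.2 : Ordinal)) this⟩
  have hclub : ∀ D : Set Ordinal, IsClubIn D κ.ord → ¬ IsRainbow f D := by
    intro D hD hR
    obtain ⟨δ, hδ, hcof, hsub⟩ := hG D hD
    obtain ⟨hCδ, hunb, -⟩ := hC δ hδ hcof
    obtain ⟨ha, hb, hlt⟩ := hab δ hδ hcof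
    have hlim : Order.IsSuccLimit δ := Ordinal.one_lt_cof_iff.1 (hcof ▸ Cardinal.one_lt_aleph0)
    have hδD : δ ∈ D := by
      refine hD.2.2 δ hδ ?_ ?_
      · rintro rfl
        exact not_lt_bot (Set.mem_Iio.1 (hCδ ha))
      · apply le_antisymm
        · exact csSup_le ⟨_, hsub ha, hCδ ha⟩ fun x hx => hx.2.le
        · refine le_of_forall_lt fun x hx => ?_
          obtain ⟨y, hy, hxy⟩ := hunb _ (hlim.succ_lt hx)
          exact (Order.lt_succ x).trans_le
            (hxy.trans (le_csSup ⟨δ, fun z hz => hz.2.le⟩ ⟨hsub hy, hCδ hy⟩))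
    have hgg : g (ab δ).1 δ = g (ab δ).2 δ := by
      simp [g, hlt]
    have hff : f (ab δ).1 δ = f (ab δ).2 δ := by
      simp only [f, hgg]
    have := hR _ (hsub ha) _ hδD _ (hsub hb) _ hδD (hCδ ha) (hCδ hb) hff
    exact hlt.ne this.1
  refine ⟨f, ?_, ?_, ?_, hclub, ?_⟩
  · intro α β h h'
    rw [hf α β h h']
    exact (p _).2
  · intro α β γ δ h1 h2 h3 h4 h
    exact (hfinj α β γ δ h1 h2 h3 h4 h).2
  · intro ξ
    by_cases hne : ∃ q : Ordinal × Ordinal, q.1 < q.2 ∧ q.2 < κ.ord ∧ f q.1 q.2 = ξ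
    · obtain ⟨q, hq1, hq2, hq3⟩ := hne
      refine (Set.encard_le_encard (t := {(g q.1 q.2, q.2), ((ab q.2).2, q.2)}) ?_).trans
        ((Set.encard_insert_le _ _).trans (by rw [Set.encard_singleton]; norm_num))
      rintro ⟨a, b⟩ ⟨h1, h2, h3⟩
      obtain ⟨h4, h5⟩ := hfinj a b q.1 q.2 h1 h2 hq1 hq2 (h3.trans hq3.symm)
      subst h5
      rw [← h4]
      by_cases hb : a = (ab q.2).2
      · right
        simp [hb]
      · left
        simp [g, hb]
    · have : {p : Ordinal × Ordinal | p.1 < p.2 ∧ p.2 < κ.ord ∧ f p.1 p.2 = ξ} = ∅ := by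
        ext q
        simp only [Set.mem_ofPred_eq, Set.mem_empty_iff_false, iff_false]
        exact fun h => hne ⟨q, h⟩
      rw [this]
      simp
  · rintro A hA hcl ⟨e⟩
    have hunb : ∀ α < κ.ord, ∃ β ∈ A, α ≤ β := by
      intro α hα
      let s : Set.Iio κ.ord → Set.Iio κ.ord := fun x => ⟨(e x : Ordinal), hA (e x).2⟩
      have hs : StrictMono s := fun x y hxy => by
        have : e x < e y := e.lt_iff_lt.2 hxy
        exact this
      exact ⟨e ⟨α, hα⟩, (e _).2, hs.le_apply (x := ⟨α, hα⟩)⟩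
    have hlim : Order.IsSuccLimit κ.ord := Cardinal.isSuccLimit_ord hreg.aleph0_le
    have hsup : κ.ord ≤ sSup A := by
      refine le_of_forall_lt fun x hx => ?_
      obtain ⟨y, hy, hxy⟩ := hunb _ (hlim.succ_lt hx)
      exact (Order.lt_succ x).trans_le
        (hxy.trans (le_csSup ⟨κ.ord, fun z hz => (hA hz).le⟩ hy))
    exact hclub A ⟨hA, hunb, fun α hα => hcl α (hα.trans_le hsup)⟩
end

section
/- If ω₂ →^poly (ω₁-cl)²_{<ω-bdd} holds, then for every ordinal σ < ω₁, ω₂ →^poly ((ω₁+σ)-cl)²_{<ω-bdd} holds; that is, if every normal <ω-bounded coloring f:[ω₂]²→ω₂ admits a closed f-rainbow set of order type ω₁, then for every σ<ω₁ every such coloring admits a closed f-rainbow set of order type ω₁+σ. -/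
open Set Cardinal Ordinal

universe u

def ClosedE (A : Set Ordinal.{u}) : Prop :=
  ∀ α : Ordinal, α ≠ 0 → (∃ x ∈ A, α < x) → (∀ b < α, ∃ x ∈ A, b < x ∧ x < α) → α ∈ A

theorem closedE_iff {A : Set Ordinal.{u}} (hA : BddAbove A) : IsClosedSet A ↔ ClosedE A := by
  constructor
  · intro h α h0 ⟨x, hx, hαx⟩ hb
    refine h α (lt_of_lt_of_le hαx (le_csSup hA hx)) h0 ?_
    apply le_antisymm
    · exact csSup_le' (fun y hy => le_of_lt hy.2)
    · by_contra hlt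
      push Not at hlt
      obtain ⟨y, hy, h1, h2⟩ := hb _ hlt
      exact absurd (le_csSup (hA.mono inter_subset_left) (⟨hy, h2⟩ : y ∈ A ∩ Set.Iio α)) (not_le.2 h1)
  · intro h α hα h0 hs
    refine h α h0 ?_ ?_
    · by_contra hc
      push Not at hc
      exact absurd (csSup_le' hc) (not_le.2 hα)
    · intro b hb
      by_contra hc
      push Not at hc
      have : sSup (A ∩ Set.Iio α) ≤ b := by
        apply csSup_le'
        intro y hy
        by_contra hy'
        exact absurd (hc y hy.1 (not_le.1 hy')) (not_le.2 hy.2)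
      rw [hs] at this
      exact absurd this (not_le.2 hb)

theorem hasOType_iff {A : Set Ordinal.{u}} {θ : Ordinal.{u}} :
    HasOType A θ ↔ typeLT A = Ordinal.lift.{u+1} θ := by
  rw [← type_lt_Iio, eq_comm, Ordinal.type_eq]
  constructor
  · rintro ⟨e⟩; exact ⟨e.toRelIsoLT⟩
  · rintro ⟨e⟩; exact ⟨OrderIso.ofRelIsoLT e⟩

theorem hasOType_union {X Y : Set Ordinal.{u}} {a b : Ordinal.{u}} (hX : HasOType X a)
    (hY : HasOType Y b) (h : ∀ x ∈ X, ∀ y ∈ Y, x < y) : HasOType (X ∪ Y) (a + b) := by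
  rw [hasOType_iff] at *
  rw [Ordinal.lift_add, ← hX, ← hY, ← Ordinal.type_sum_lex, eq_comm, Ordinal.type_eq]
  let g : X ⊕ Y → (X ∪ Y : Set Ordinal.{u}) :=
    Sum.elim (fun x => ⟨x, Or.inl x.2⟩) (fun y => ⟨y, Or.inr y.2⟩)
  have hg : ∀ p q, Sum.Lex (· < ·) (· < ·) p q → g p < g q := by
    rintro (p | p) (q | q) h1
    · have h2 := Sum.lex_inl_inl.1 h1; exact h2
    · exact h _ p.2 _ q.2
    · exact absurd h1 Sum.lex_inr_inl
    · have h2 := Sum.lex_inr_inr.1 h1; exact h2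
  have hsurj : Function.Surjective g := by
    rintro ⟨z, hz | hz⟩
    · exact ⟨Sum.inl ⟨z, hz⟩, rfl⟩
    · exact ⟨Sum.inr ⟨z, hz⟩, rfl⟩
  have hg' : ∀ p q, g p < g q → Sum.Lex (· < ·) (· < ·) p q := by
    intro p q hpq
    rcases trichotomous_of (Sum.Lex (· < ·) (· < ·)) p q with h1 | h1 | h1
    · exact h1
    · rw [h1] at hpq; exact absurd hpq (lt_irrefl _)
    · exact absurd (hg _ _ h1) (not_lt.2 hpq.le)
  have hinj : Function.Injective g := by
    intro p q hpq
    rcases trichotomous_of (Sum.Lex (· < ·) (· < ·)) p q with h1 | h1 | h1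
    · exact absurd hpq (hg _ _ h1).ne
    · exact h1
    · exact absurd hpq (hg _ _ h1).ne'
  exact ⟨⟨Equiv.ofBijective g ⟨hinj, hsurj⟩, fun {p q} => ⟨hg' p q, hg p q⟩⟩⟩

theorem countable_Iio_of_lt {a : Ordinal.{u}} (h : a < (Cardinal.aleph 1).ord) :
    (Set.Iio a).Countable := by
  rw [Cardinal.lt_ord] at h
  rw [← Cardinal.le_aleph0_iff_set_countable, Cardinal.mk_Iio_ordinal]
  rw [← Cardinal.lift_aleph0.{u+1,u}, Cardinal.lift_le]
  rw [← Order.lt_succ_iff]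
  simpa [← Cardinal.succ_aleph0] using h

theorem HasOType.bound {A : Set Ordinal.{u}} (hA : HasOType A (Cardinal.aleph 1).ord)
    {S : Set Ordinal.{u}} (hS : S ⊆ A) (hc : S.Countable) : ∃ b ∈ A, ∀ s ∈ S, s < b := by
  obtain ⟨e⟩ := hA
  have : Countable S := hc
  let g : S → Ordinal.{u} := fun s => Order.succ ((e.symm ⟨s, hS s.2⟩ : Set.Iio (Cardinal.aleph 1).ord) : Ordinal.{u})
  have hlim : Order.IsSuccLimit (Cardinal.aleph.{u} 1).ord :=
    Cardinal.isSuccLimit_ord (Cardinal.aleph0_le_aleph 1)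
  have hg : ∀ s, g s < ω₁ := by
    intro s
    rw [← Cardinal.ord_aleph]
    exact hlim.succ_lt (e.symm ⟨s, hS s.2⟩).2
  have hsup : (⨆ s, g s) < (Cardinal.aleph.{u} 1).ord := by
    rw [Cardinal.ord_aleph]
    exact Ordinal.iSup_lt_omega_one hg
  have hbdd : BddAbove (Set.range g) := ⟨ω₁, by rintro _ ⟨s, rfl⟩; exact (hg s).le⟩
  refine ⟨e ⟨_, hsup⟩, (e ⟨_, hsup⟩).2, fun s hs => ?_⟩
  have h1 : e.symm ⟨s, hS hs⟩ < ⟨_, hsup⟩ := by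
    rw [← Subtype.coe_lt_coe]
    exact lt_of_lt_of_le (Order.lt_succ _) (le_ciSup hbdd ⟨s, hs⟩)
  have h2 := e.strictMono h1
  rw [e.apply_symm_apply] at h2
  exact h2

theorem HasOType.initCountable {A : Set Ordinal.{u}} (hA : HasOType A (Cardinal.aleph 1).ord)
    {a : Ordinal.{u}} (ha : a ∈ A) : {x | x ∈ A ∧ x ≤ a}.Countable := by
  obtain ⟨e⟩ := hA
  have hlim : Order.IsSuccLimit (Cardinal.aleph.{u} 1).ord :=
    Cardinal.isSuccLimit_ord (Cardinal.aleph0_le_aleph 1)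
  have h1 := countable_Iio_of_lt (hlim.succ_lt (e.symm ⟨a, ha⟩).2)
  have h2 : (((↑) : Set.Iio (Cardinal.aleph.{u} 1).ord → Ordinal.{u}) ⁻¹' (Set.Iio (Order.succ (e.symm ⟨a, ha⟩).1))).Countable :=
    h1.preimage Subtype.val_injective
  refine (h2.image (fun i => (e i : Ordinal.{u}))).mono ?_
  rintro x ⟨hx, hxa⟩
  refine ⟨e.symm ⟨x, hx⟩, ?_, by simp⟩
  have : e.symm ⟨x, hx⟩ ≤ e.symm ⟨a, ha⟩ := e.symm.monotone hxa
  exact Order.lt_succ_iff.2 (Subtype.coe_le_coe.2 this)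

theorem HasOType.uncountable_sub {A C : Set Ordinal.{u}} (hA : HasOType A (Cardinal.aleph 1).ord)
    (hC : C ⊆ A) (hu : ∀ a ∈ A, ∃ c ∈ C, a < c) : HasOType C (Cardinal.aleph 1).ord := by
  have hunc : ¬ C.Countable := by
    intro hc
    obtain ⟨b, hb, h⟩ := hA.bound hC hc
    obtain ⟨c, hc, hbc⟩ := hu b hb
    exact absurd (h c hc) (not_lt.2 hbc.le)
  rw [hasOType_iff] at *
  apply le_antisymm
  · rw [← hA]
    exact Ordinal.type_le_iff'.2 ⟨⟨⟨Set.inclusion hC, Set.inclusion_injective hC⟩, Iff.rfl⟩⟩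
  · rw [Cardinal.lift_ord, Cardinal.ord_le, Ordinal.card_type]
    rw [← Cardinal.le_aleph0_iff_set_countable, not_le] at hunc
    simpa [← Cardinal.succ_aleph0] using hunc

theorem HasOType.mk {A : Set Ordinal.{u}} (hA : HasOType A (Cardinal.aleph 1).ord) :
    #A = Cardinal.aleph 1 := by
  rw [hasOType_iff] at hA
  have := congrArg Ordinal.card hA
  simpa using this

theorem sSup_lt_W2 {A : Set Ordinal.{u}} (hA : A ⊆ Set.Iio (Cardinal.aleph 2).ord)
    (hc : #A ≤ Cardinal.aleph 1) : sSup A < (Cardinal.aleph 2).ord := by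
  apply Ordinal.sSup_lt_of_lt_cof
  · have h2 : (2 : Ordinal.{u}) = 1 + 1 := one_add_one_eq_two.symm
    have : (Cardinal.aleph.{u} 2).ord.cof = Cardinal.aleph 2 := by
      rw [h2]; exact (Cardinal.isRegular_aleph_add_one 1).cof_ord
    rw [← Ordinal.lift_cof, this]
    refine lt_of_le_of_lt hc ?_
    simp
  · exact hA

universe v w u1 u2

theorem fiber_finite {f : Ordinal.{u} → Ordinal.{u} → Ordinal.{v}}
    (hf : FinBounded f (Cardinal.aleph 2).ord) {τ : Ordinal.{u}} (hτ : τ < (Cardinal.aleph 2).ord)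
    (ξ : Ordinal.{v}) : {x | x < τ ∧ f x τ = ξ}.Finite := by
  refine ((hf ξ).image Prod.fst).subset ?_
  rintro x ⟨h1, h2⟩
  exact ⟨(x, τ), ⟨h1, hτ, h2⟩, rfl⟩

theorem thin {f : Ordinal.{u} → Ordinal.{u} → Ordinal.{v}}
    (hf : FinBounded f (Cardinal.aleph 2).ord) {A T : Set Ordinal.{u}} (hcl : ClosedE A)
    (hot : HasOType A (Cardinal.aleph 1).ord) (hT : T.Countable)
    (hT2 : ∀ τ ∈ T, τ < (Cardinal.aleph 2).ord) (hAT : ∀ a ∈ A, ∀ τ ∈ T, a < τ) :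
    ∃ C ⊆ A, ClosedE C ∧ HasOType C (Cardinal.aleph 1).ord ∧ (∀ a ∈ A, ∃ c ∈ C, a < c) ∧
      (∀ τ ∈ T, ∀ x ∈ C, ∀ y ∈ C, f x τ = f y τ → x = y) ∧
      (∀ τ ∈ T, ∀ x ∈ C, ∀ γ ∈ T, γ < τ → f x τ ≠ f γ τ) := by
  let K : Ordinal.{u} → Set Ordinal.{u} := fun α => {x | x ∈ A ∧ ∃ τ ∈ T, f x τ = f α τ}
  let K0 : Set Ordinal.{u} := {x | x ∈ A ∧ ∃ τ ∈ T, ∃ γ ∈ T, γ < τ ∧ f x τ = f γ τ}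
  have hK : ∀ α, (K α).Countable := by
    intro α
    refine (hT.biUnion (t := fun τ _ => {x | x < τ ∧ τ < (Cardinal.aleph 2).ord ∧ f x τ = f α τ})
      (fun τ hτ => ?_)).mono ?_
    · exact ((fiber_finite hf (hT2 τ hτ) (f α τ)).subset (fun x hx => ⟨hx.1, hx.2.2⟩)).countable
    · rintro x ⟨hx, τ, hτ, he⟩
      exact Set.mem_biUnion hτ ⟨hAT x hx τ hτ, hT2 τ hτ, he⟩
  have hK0 : K0.Countable := by
    refine (hT.biUnion (t := fun τ _ => ⋃ γ ∈ T, {x | x < τ ∧ f x τ = f γ τ})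
      (fun τ hτ => hT.biUnion (fun γ _ => ?_))).mono ?_
    · exact (fiber_finite hf (hT2 τ hτ) (f γ τ)).countable
    · rintro x ⟨hx, τ, hτ, γ, hγ, _, he⟩
      exact Set.mem_biUnion hτ (Set.mem_biUnion hγ ⟨hAT x hx τ hτ, he⟩)
  have hG : ∀ a : A, ∃ b : A, a < b ∧ ∀ α ∈ A, α ≤ a.1 → ∀ x ∈ K α, x < b.1 := by
    intro a
    have hc : (⋃ α ∈ {x | x ∈ A ∧ x ≤ a.1}, K α).Countable :=
      (hot.initCountable a.2).biUnion (fun α _ => hK α)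
    obtain ⟨b, hb, h⟩ := hot.bound (S := {a.1} ∪ ⋃ α ∈ {x | x ∈ A ∧ x ≤ a.1}, K α) (by
      rintro x (hx | hx)
      · rw [hx]; exact a.2
      · simp only [Set.mem_iUnion] at hx
        obtain ⟨α, _, hx⟩ := hx
        exact hx.1) ((Set.countable_singleton _).union hc)
    refine ⟨⟨b, hb⟩, h a.1 (Or.inl rfl), fun α hα hle x hx => h x (Or.inr ?_)⟩
    exact Set.mem_biUnion (show α ∈ {x | x ∈ A ∧ x ≤ a.1} from ⟨hα, hle⟩) hx
  choose G hG1 hG2 using hG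
  let C : Set Ordinal.{u} :=
    {γ | γ ∈ A ∧ (∀ x ∈ K0, x < γ) ∧ ∀ α ∈ A, α < γ → ∀ x ∈ K α, x < γ}
  have hCA : C ⊆ A := fun x hx => hx.1
  have hunb : ∀ a ∈ A, ∃ c ∈ C, a < c := by
    intro a ha
    obtain ⟨b, hb, hb'⟩ := hot.bound (S := {a} ∪ K0) (by
      rintro x (hx | hx)
      · rw [hx]; exact ha
      · exact hx.1) ((Set.countable_singleton _).union hK0)
    let s : ℕ → A := fun n => G^[n] ⟨b, hb⟩
    have hs : ∀ n, s (n+1) = G (s n) := fun n => Function.iterate_succ_apply' _ _ _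
    have hslt : ∀ n, (s n).1 < (s (n+1)).1 := fun n => by rw [hs]; exact hG1 _
    obtain ⟨d, hd, hd'⟩ := hot.bound (S := Set.range (fun n => (s n).1))
      (by rintro _ ⟨n, rfl⟩; exact (s n).2) (Set.countable_range _)
    have hbdd : BddAbove (Set.range (fun n => (s n).1)) :=
      ⟨d, by rintro _ ⟨n, rfl⟩; exact (hd' _ ⟨n, rfl⟩).le⟩
    obtain ⟨d2, hd2, hd2'⟩ := hot.bound (S := {d}) (by simpa using hd) (Set.countable_singleton _)
    set c := ⨆ n, (s n).1 with hc
    have hlt : ∀ n, (s n).1 < c := fun n => (hslt n).trans_le (le_ciSup hbdd (n+1))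
    have hex : ∀ e < c, ∃ n, e < (s n).1 := fun e he => exists_lt_of_lt_ciSup he
    have hbc : b < c := hlt 0
    refine ⟨c, ⟨?_, ?_, ?_⟩, (hb' a (Or.inl rfl)).trans hbc⟩
    · refine hcl c (ne_bot_of_gt hbc) ⟨d2, hd2, ?_⟩ ?_
      · refine lt_of_le_of_lt (ciSup_le' fun n => ?_) (hd2' d rfl)
        exact (hd' _ ⟨n, rfl⟩).le
      · intro e he
        obtain ⟨n, hn⟩ := hex e he
        exact ⟨_, (s n).2, hn, hlt n⟩
    · intro x hx
      exact (hb' x (Or.inr hx)).trans hbc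
    · intro α hα hαc x hx
      obtain ⟨n, hn⟩ := hex α hαc
      have := hG2 (s n) α hα hn.le x hx
      rw [← hs] at this
      exact this.trans (hlt _)
  refine ⟨C, hCA, ?_, hot.uncountable_sub hCA hunb, hunb, ?_, ?_⟩
  · intro α h0 ⟨x, hx, hαx⟩ hb
    refine ⟨hcl α h0 ⟨x, hCA hx, hαx⟩ fun b hbα => ?_, ?_, ?_⟩
    · obtain ⟨y, hy, h⟩ := hb b hbα
      exact ⟨y, hCA hy, h⟩
    · intro z hz
      obtain ⟨y, hy, _, h⟩ := hb 0 (pos_iff_ne_zero.2 h0)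
      exact (hy.2.1 z hz).trans h
    · intro β hβ hβα z hz
      obtain ⟨y, hy, h1, h⟩ := hb β hβα
      exact (hy.2.2 β hβ h1 z hz).trans h
  · intro τ hτ x hx y hy he
    rcases lt_trichotomy x y with h | h | h
    · exact absurd (hy.2.2 x hx.1 h y ⟨hy.1, τ, hτ, he.symm⟩) (lt_irrefl _)
    · exact h
    · exact absurd (hx.2.2 y hy.1 h x ⟨hx.1, τ, hτ, he⟩) (lt_irrefl _)
  · intro τ hτ x hx γ hγ hlt he
    exact absurd (hx.2.1 x ⟨hx.1, τ, hτ, γ, hγ, hlt, he⟩) (lt_irrefl _)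

theorem core {f : Ordinal.{u} → Ordinal.{u} → Ordinal.{v}}
    (hn : IsNormalColoring f (Cardinal.aleph 2).ord)
    (hf : FinBounded f (Cardinal.aleph 2).ord)
    (H : ∀ ρ < (Cardinal.aleph.{u} 2).ord, ∃ A ⊆ Set.Iio (Cardinal.aleph.{u} 2).ord,
      (∀ a ∈ A, ρ < a) ∧ ClosedE A ∧ HasOType A (Cardinal.aleph 1).ord ∧ IsRainbow f A)
    (σ : Ordinal.{u}) (hσ : σ < (Cardinal.aleph 1).ord) :
    ∃ A ⊆ Set.Iio (Cardinal.aleph.{u} 2).ord, ClosedE A ∧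
      HasOType A ((Cardinal.aleph 1).ord + σ) ∧ IsRainbow f A := by
  have hW0 : (0 : Ordinal.{u}) < (Cardinal.aleph 2).ord := (Cardinal.ord_pos).2 (Cardinal.aleph_pos 2)
  rcases eq_or_ne σ 0 with rfl | hσ0
  · obtain ⟨A, h1, _, h2, h3, h4⟩ := H 0 hW0
    exact ⟨A, h1, h2, by simpa using h3, h4⟩
  obtain ⟨σ', rfl⟩ : ∃ σ', σ = 1 + σ' :=
    ⟨σ - 1, (Ordinal.add_sub_cancel_of_le (Order.one_le_iff_pos.2 (pos_iff_ne_zero.2 hσ0))).symm⟩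
  have hσ' : σ' < (Cardinal.aleph 1).ord := lt_of_le_of_lt le_add_self hσ
  let D : Set Ordinal.{u} := {δ | ∃ A ⊆ Set.Iio (Cardinal.aleph.{u} 2).ord, ClosedE A ∧
    HasOType A (Cardinal.aleph 1).ord ∧ IsRainbow f A ∧ sSup A = δ}
  have hD : D ⊆ Set.Iio (Cardinal.aleph.{u} 2).ord := by
    rintro δ ⟨A, hA, _, hot, _, rfl⟩
    exact sSup_lt_W2 hA hot.mk.le
  have hDu : ℵ₁ ≤ #D := by
    by_contra hlt
    push Not at hlt
    have := sSup_lt_W2 hD hlt.le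
    obtain ⟨A, hA, hρ, hcl, hot, hr⟩ := H _ this
    have hδ : sSup A ∈ D := ⟨A, hA, hcl, hot, hr, rfl⟩
    have h1 := le_csSup ⟨_, fun x hx => (hD hx).le⟩ hδ
    obtain ⟨b, hb, _⟩ := hot.bound (S := ∅) (by simp) (by simp)
    have h2 := le_csSup ⟨_, fun x hx => (hA hx).le⟩ hb
    exact absurd (hρ b hb) (not_lt.2 (h2.trans h1))
  obtain ⟨D', hD', hcard⟩ := Cardinal.le_mk_iff_exists_subset.1 hDu
  have hρ := sSup_lt_W2 (hD'.trans hD) hcard.le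
  obtain ⟨A', hA', hA'ρ, hA'cl, ⟨φ⟩, hA'r⟩ := H _ hρ
  let φ' : Set.Iio σ' → Ordinal.{u} := fun i => φ ⟨i.1, lt_trans i.2 hσ'⟩
  have hφ' : StrictMono φ' := fun i j hij => φ.strictMono hij
  let B : Set Ordinal.{u} := Set.range φ'
  have hBA : B ⊆ A' := by rintro _ ⟨i, rfl⟩; exact Subtype.prop _
  have hBot : HasOType B σ' := ⟨hφ'.orderIso⟩
  have hBc : B.Countable := by
    have : Countable (Set.Iio σ') := countable_Iio_of_lt hσ'
    exact Set.countable_range _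
  have hBcl : ClosedE B := by
    rintro α h0 ⟨_, ⟨i, rfl⟩, hαx⟩ hb
    have hα : α ∈ A' := hA'cl α h0 ⟨_, hBA ⟨i, rfl⟩, hαx⟩ fun b hbα => by
      obtain ⟨y, hy, h⟩ := hb b hbα
      exact ⟨y, hBA hy, h⟩
    have h1 : φ.symm ⟨α, hα⟩ < ⟨i.1, lt_trans i.2 hσ'⟩ := by
      rw [φ.symm_apply_lt]; exact hαx
    refine ⟨⟨(φ.symm ⟨α, hα⟩).1, lt_trans (Subtype.coe_lt_coe.2 h1) i.2⟩, ?_⟩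
    exact congrArg Subtype.val (φ.apply_symm_apply ⟨α, hα⟩)
  have hB2 : ∀ b ∈ B, b < (Cardinal.aleph.{u} 2).ord := fun b hb => hA' (hBA hb)
  let Q : Set Ordinal.{u} := ⋃ β ∈ B, ⋃ γ ∈ B, {x | x < β ∧ f x β = f γ β}
  have hQ : Q.Countable := hBc.biUnion fun β hβ => hBc.biUnion fun γ _ =>
    (fiber_finite hf (hB2 β hβ) _).countable
  obtain ⟨δ, hδD', hδQ⟩ : ∃ δ ∈ D', δ ∉ Q := by
    by_contra hc
    push Not at hc
    have h1 : D'.Countable := hQ.mono hc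
    rw [← Cardinal.le_aleph0_iff_set_countable, hcard] at h1
    exact absurd h1 (not_le.2 Cardinal.aleph0_lt_aleph_one)
  have hδB : ∀ b ∈ B, δ < b := fun b hb =>
    lt_of_le_of_lt (le_csSup ⟨_, fun x hx => (hD (hD' hx)).le⟩ hδD') (hA'ρ b (hBA hb))
  have hδ2 : δ < (Cardinal.aleph.{u} 2).ord := hD (hD' hδD')
  obtain ⟨A, hA, hAcl, hAot, hAr, hAδ⟩ := hD' hδD'
  have hAlt : ∀ a ∈ A, a < δ := by
    intro a ha
    obtain ⟨b, hb, h⟩ := hAot.bound (S := {a}) (by simpa using ha) (by simp)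
    rw [← hAδ]
    exact (h a rfl).trans_le (le_csSup ⟨_, fun x hx => (hA hx).le⟩ hb)
  have hT2 : ∀ τ ∈ ({δ} ∪ B : Set Ordinal.{u}), τ < (Cardinal.aleph 2).ord := by
    rintro τ (h | h)
    · rw [h]; exact hδ2
    · exact hB2 τ h
  have hAT : ∀ a ∈ A, ∀ τ ∈ ({δ} ∪ B : Set Ordinal.{u}), a < τ := by
    rintro a ha τ (h | h)
    · rw [h]; exact hAlt a ha
    · exact (hAlt a ha).trans (hδB τ h)
  obtain ⟨C, hCA, hCcl, hCot, hCu, hC1, hC2⟩ :=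
    thin hf hAcl hAot ((Set.countable_singleton δ).union hBc) hT2 hAT
  have hCδ : ∀ e < δ, ∃ c ∈ C, e < c := by
    intro e he
    rw [← hAδ] at he
    obtain ⟨a, ha, hea⟩ := exists_lt_of_lt_csSup' he
    obtain ⟨c, hc, h⟩ := hCu a ha
    exact ⟨c, hc, hea.trans h⟩
  have h2 : ∀ x ∈ C ∪ ({δ} ∪ B), x < (Cardinal.aleph.{u} 2).ord := by
    rintro x (h | h)
    · exact hA (hCA h)
    · exact hT2 x h
  refine ⟨C ∪ ({δ} ∪ B), h2, ?_, ?_, ?_⟩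
  · intro α h0 ⟨x, hx, hαx⟩ hb
    rcases lt_trichotomy α δ with h | h | h
    · left
      obtain ⟨c, hc, hαc⟩ := hCδ α h
      refine hCcl α h0 ⟨c, hc, hαc⟩ fun b hbα => ?_
      obtain ⟨y, hy | hy | hy, h1, h3⟩ := hb b hbα
      · exact ⟨y, hy, h1, h3⟩
      · rw [hy] at h3; exact absurd h3 (not_lt.2 h.le)
      · exact absurd (h3.trans h) (not_lt.2 (hδB y hy).le)
    · exact Or.inr (Or.inl h)
    · right; right
      refine hBcl α h0 ⟨x, ?_, hαx⟩ fun b hbα => ?_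
      · rcases hx with hx | hx | hx
        · exact absurd ((hAlt x (hCA hx)).trans h) (not_lt.2 hαx.le)
        · rw [hx] at hαx; exact absurd h (not_lt.2 hαx.le)
        · exact hx
      · obtain ⟨y, hy | hy | hy, h1, h3⟩ := hb (max b δ) (max_lt hbα h)
        · exact absurd (hAlt y (hCA hy)) (not_lt.2 ((le_max_right _ _).trans h1.le))
        · rw [hy] at h1; exact absurd h1 (not_lt.2 (le_max_right _ _))
        · exact ⟨y, hy, (le_max_left _ _).trans_lt h1, h3⟩
  · refine hasOType_union hCot (hasOType_union ?_ hBot ?_) fun x hx => hAT x (hCA hx)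
    · rw [hasOType_iff]; simp
    · intro x hx y hy
      rw [hx]; exact hδB y hy
  · intro α hα β hβ γ hγ ε hε hαβ hγε he
    obtain rfl : β = ε := hn α β γ ε hαβ (h2 _ hβ) hγε (h2 _ hε) he
    refine ⟨?_, rfl⟩
    rcases hβ with hβ | hβ
    · have key : ∀ x ∈ C ∪ ({δ} ∪ B), x < β → x ∈ A := by
        rintro x (hx | hx) hlt
        · exact hCA hx
        · exact absurd (hAT β (hCA hβ) x hx) (not_lt.2 hlt.le)
      exact (hAr α (key α hα hαβ) β (hCA hβ) γ (key γ hγ hγε) β (hCA hβ) hαβ hγε he).1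
    · rcases hα with hα | hα <;> rcases hγ with hγ | hγ
      · exact hC1 β hβ α hα γ hγ he
      · exact absurd he (hC2 β hβ α hα γ hγ hγε)
      · exact absurd he.symm (hC2 β hβ γ hγ α hα hαβ)
      · have hβB : β ∈ B := by
          rcases hβ with hβ | hβ
          · exfalso
            rw [hβ] at hαβ
            rcases hα with hα | hα
            · rw [hα] at hαβ; exact lt_irrefl _ hαβ
            · exact absurd (hδB α hα) (not_lt.2 hαβ.le)
          · exact hβ
        have hQ' : ∀ z ∈ B, f δ β ≠ f z β := fun z hz h => hδQ
          (Set.mem_biUnion hβB (Set.mem_biUnion hz ⟨hδB β hβB, h⟩))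
        rcases hα with hα | hα <;> rcases hγ with hγ | hγ
        · rw [hα, hγ]
        · rw [hα] at he; exact absurd he (hQ' γ hγ)
        · rw [hγ] at he; exact absurd he.symm (hQ' α hα)
        · exact (hA'r α (hBA hα) β (hBA hβB) γ (hBA hγ) β (hBA hβB) hαβ hγε he).1

theorem exists_transfer : ∃ e : Ordinal.{u1} → Ordinal.{w},
    (∀ x < (Cardinal.aleph 2).ord, e x < (Cardinal.aleph 2).ord) ∧
    (∀ x < (Cardinal.aleph 2).ord, ∀ y < (Cardinal.aleph 2).ord, x < y → e x < e y) ∧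
    (∀ y < (Cardinal.aleph 2).ord, ∃ x < (Cardinal.aleph 2).ord, e x = y) ∧
    ∀ A ⊆ Set.Iio (Cardinal.aleph 2).ord, HasOType A (Cardinal.aleph 1).ord →
      HasOType (e '' A) (Cardinal.aleph 1).ord := by
  have h2 : Nonempty (Set.Iio (Cardinal.aleph.{u1} 2).ord ≃o Set.Iio (Cardinal.aleph.{w} 2).ord) := by
    obtain ⟨r⟩ := (Ordinal.lift_type_eq.{u1+1, w+1, max (u1+1) (w+1)} (r := ((· < ·) : Set.Iio (Cardinal.aleph.{u1} 2).ord → Set.Iio (Cardinal.aleph.{u1} 2).ord → Prop)) (s := ((· < ·) : Set.Iio (Cardinal.aleph.{w} 2).ord → Set.Iio (Cardinal.aleph.{w} 2).ord → Prop))).1 (by simp)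
    exact ⟨OrderIso.ofRelIsoLT r⟩
  have h1 : Nonempty (Set.Iio (Cardinal.aleph.{u1} 1).ord ≃o Set.Iio (Cardinal.aleph.{w} 1).ord) := by
    obtain ⟨r⟩ := (Ordinal.lift_type_eq.{u1+1, w+1, max (u1+1) (w+1)} (r := ((· < ·) : Set.Iio (Cardinal.aleph.{u1} 1).ord → Set.Iio (Cardinal.aleph.{u1} 1).ord → Prop)) (s := ((· < ·) : Set.Iio (Cardinal.aleph.{w} 1).ord → Set.Iio (Cardinal.aleph.{w} 1).ord → Prop))).1 (by simp)
    exact ⟨OrderIso.ofRelIsoLT r⟩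
  obtain ⟨φ⟩ := h2
  obtain ⟨ψ⟩ := h1
  classical
  let e : Ordinal.{u1} → Ordinal.{w} := fun x =>
    if h : x < (Cardinal.aleph 2).ord then φ ⟨x, h⟩ else 0
  have he : ∀ x (h : x < (Cardinal.aleph 2).ord), e x = φ ⟨x, h⟩ := fun x h => dif_pos h
  have hm : ∀ x < (Cardinal.aleph 2).ord, ∀ y < (Cardinal.aleph 2).ord, x < y → e x < e y := by
    intro x hx y hy hxy
    rw [he x hx, he y hy]
    exact φ.strictMono (show (⟨x, hx⟩ : Set.Iio (Cardinal.aleph.{u1} 2).ord) < ⟨y, hy⟩ from hxy)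
  refine ⟨e, ?_, hm, ?_, ?_⟩
  · intro x hx
    rw [he x hx]; exact (φ ⟨x, hx⟩).2
  · intro y hy
    refine ⟨(φ.symm ⟨y, hy⟩).1, (φ.symm ⟨y, hy⟩).2, ?_⟩
    rw [he _ (φ.symm ⟨y, hy⟩).2]; simp
  · rintro A hA ⟨χ⟩
    have hmA : StrictMonoOn e A := fun x hx y hy hxy => hm x (hA hx) y (hA hy) hxy
    exact ⟨(ψ.symm.trans χ).trans (hmA.orderIso e A)⟩

theorem shift
    (h : ∀ f : Ordinal.{u1} → Ordinal.{u1} → Ordinal.{u2},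
      (∀ α β : Ordinal, α < β → β < (Cardinal.aleph 2).ord → f α β < (Cardinal.aleph 2).ord) →
      IsNormalColoring f (Cardinal.aleph 2).ord → FinBounded f (Cardinal.aleph 2).ord →
      ∃ A : Set Ordinal, A ⊆ Set.Iio (Cardinal.aleph 2).ord ∧ IsClosedSet A ∧
        HasOType A (Cardinal.aleph 1).ord ∧ IsRainbow f A)
    (f : Ordinal.{u} → Ordinal.{u} → Ordinal.{v})
    (hv : ∀ α β : Ordinal, α < β → β < (Cardinal.aleph 2).ord → f α β < (Cardinal.aleph 2).ord)
    (hn : IsNormalColoring f (Cardinal.aleph 2).ord)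
    (hf : FinBounded f (Cardinal.aleph 2).ord) :
    ∀ ρ < (Cardinal.aleph.{u} 2).ord, ∃ A ⊆ Set.Iio (Cardinal.aleph.{u} 2).ord,
      (∀ a ∈ A, ρ < a) ∧ ClosedE A ∧ HasOType A (Cardinal.aleph 1).ord ∧ IsRainbow f A := by
  intro ρ hρ
  obtain ⟨e, e1, e2, e3, e4⟩ := exists_transfer.{u, u1}
  obtain ⟨d, d1, d2, d3, d4⟩ := exists_transfer.{u2, v}
  have hlim : Order.IsSuccLimit (Cardinal.aleph.{u} 2).ord :=
    Cardinal.isSuccLimit_ord (Cardinal.aleph0_le_aleph 2)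
  have hadd : ∀ x y : Ordinal.{u}, x < (Cardinal.aleph 2).ord → y < (Cardinal.aleph 2).ord →
      x + y < (Cardinal.aleph 2).ord := fun x y hx hy =>
    Ordinal.isPrincipal_add_ord (Cardinal.aleph0_le_aleph 2) hx hy
  let g : Ordinal.{u1} → Ordinal.{u} := fun x => Order.succ ρ + e x
  have g1 : ∀ x < (Cardinal.aleph 2).ord, g x < (Cardinal.aleph 2).ord := fun x hx =>
    hadd _ _ (hlim.succ_lt hρ) (e1 x hx)
  have g2 : ∀ x < (Cardinal.aleph 2).ord, ∀ y < (Cardinal.aleph 2).ord, x < y → g x < g y :=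
    fun x hx y hy hxy => by simpa [g] using e2 x hx y hy hxy
  have g2' : ∀ x < (Cardinal.aleph 2).ord, ∀ y < (Cardinal.aleph 2).ord, g x < g y → x < y := by
    intro x hx y hy hxy
    by_contra hc
    rcases (not_lt.1 hc).lt_or_eq with hc | hc
    · exact absurd (g2 y hy x hx hc) (not_lt.2 hxy.le)
    · rw [hc] at hxy; exact lt_irrefl _ hxy
  have ginj : ∀ x < (Cardinal.aleph 2).ord, ∀ y < (Cardinal.aleph 2).ord, g x = g y → x = y := by
    intro x hx y hy hxy
    rcases lt_trichotomy x y with hc | hc | hc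
    · exact absurd hxy (g2 x hx y hy hc).ne
    · exact hc
    · exact absurd hxy (g2 y hy x hx hc).ne'
  have g3 : ∀ y < (Cardinal.aleph 2).ord, ρ < y → ∃ x < (Cardinal.aleph 2).ord, g x = y := by
    intro y hy hρy
    obtain ⟨x, hx, hxe⟩ := e3 (y - Order.succ ρ) (lt_of_le_of_lt (Ordinal.sub_le_self _ _) hy)
    refine ⟨x, hx, ?_⟩
    simp only [g, hxe]
    exact Ordinal.add_sub_cancel_of_le (Order.succ_le_of_lt hρy)
  have g4 : ∀ x, ρ < g x := fun x => (Order.lt_succ ρ).trans_le le_self_add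
  have dinj : ∀ x < (Cardinal.aleph 2).ord, ∀ y < (Cardinal.aleph 2).ord, d x = d y → x = y := by
    intro x hx y hy hxy
    rcases lt_trichotomy x y with hc | hc | hc
    · exact absurd hxy (d2 x hx y hy hc).ne
    · exact hc
    · exact absurd hxy (d2 y hy x hx hc).ne'
  have hgv : ∀ α β, α < β → β < (Cardinal.aleph 2).ord →
      f (g α) (g β) < (Cardinal.aleph 2).ord := fun α β hαβ hβ =>
    hv _ _ (g2 _ (hαβ.trans hβ) _ hβ hαβ) (g1 _ hβ)
  obtain ⟨A, hA, hAcl, hAot, hAr⟩ := h (fun α β => d (f (g α) (g β)))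
    (fun α β hαβ hβ => d1 _ (hgv α β hαβ hβ))
    (by
      intro α β γ δ hαβ hβ hγδ hδ he
      have he' := dinj _ (hgv _ _ hαβ hβ) _ (hgv _ _ hγδ hδ) he
      exact ginj _ hβ _ hδ (hn _ _ _ _ (g2 _ (hαβ.trans hβ) _ hβ hαβ) (g1 _ hβ)
        (g2 _ (hγδ.trans hδ) _ hδ hγδ) (g1 _ hδ) he'))
    (by
      intro ξ
      by_cases hξ : ∃ η < (Cardinal.aleph 2).ord, d η = ξ
      · obtain ⟨η, hη, rfl⟩ := hξ
        refine Set.Finite.of_finite_image (f := fun p => (g p.1, g p.2)) ((hf η).subset ?_) ?_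
        · rintro _ ⟨⟨a, b⟩, ⟨hab, hb, he⟩, rfl⟩
          exact ⟨g2 _ (hab.trans hb) _ hb hab, g1 _ hb, dinj _ (hgv _ _ hab hb) _ hη he⟩
        · rintro ⟨a, b⟩ ⟨hab, hb, _⟩ ⟨a', b'⟩ ⟨hab', hb', _⟩ he
          simp only [Prod.mk.injEq] at he
          exact Prod.ext (ginj _ (hab.trans hb) _ (hab'.trans hb') he.1) (ginj _ hb _ hb' he.2)
      · convert Set.finite_empty
        ext ⟨a, b⟩
        simp only [Set.mem_ofPred_eq, Set.mem_empty_iff_false, iff_false]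
        rintro ⟨hab, hb, he⟩
        exact hξ ⟨_, hgv _ _ hab hb, he⟩)
  rw [closedE_iff ⟨_, fun x hx => (hA hx).le⟩] at hAcl
  refine ⟨g '' A, ?_, ?_, ?_, ?_, ?_⟩
  · rintro _ ⟨x, hx, rfl⟩; exact g1 x (hA hx)
  · rintro _ ⟨x, hx, rfl⟩; exact g4 x
  · rintro α h0 ⟨_, ⟨x, hx, rfl⟩, hαx⟩ hb
    have hρα : ρ < α := by
      obtain ⟨_, ⟨y, hy, rfl⟩, _, hlt⟩ := hb 0 (pos_iff_ne_zero.2 h0)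
      exact (g4 y).trans hlt
    obtain ⟨a, ha, rfl⟩ := g3 α (hαx.trans (g1 x (hA hx))) hρα
    refine ⟨a, hAcl a ?_ ⟨x, hx, g2' _ ha _ (hA hx) hαx⟩ ?_, rfl⟩
    · obtain ⟨_, ⟨y, hy, rfl⟩, _, hlt⟩ := hb 0 (pos_iff_ne_zero.2 h0)
      exact ne_bot_of_gt (g2' _ (hA hy) _ ha hlt)
    · intro b hba
      obtain ⟨_, ⟨y, hy, rfl⟩, h1, hlt⟩ := hb (g b) (g2 _ (hba.trans ha) _ ha hba)
      exact ⟨y, hy, g2' _ (hba.trans ha) _ (hA hy) h1, g2' _ (hA hy) _ ha hlt⟩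
  · obtain ⟨χ⟩ := e4 A hA hAot
    have hm : StrictMonoOn (fun x => Order.succ ρ + x) (e '' A) := fun x _ y _ hxy => by
      simpa using hxy
    have := hm.orderIso _ _
    rw [← Set.image_comp] at this
    exact ⟨χ.trans this⟩
  · rintro _ ⟨a, ha, rfl⟩ _ ⟨b, hb, rfl⟩ _ ⟨c, hc, rfl⟩ _ ⟨x, hx, rfl⟩ hab hcx he
    obtain ⟨h1, h2⟩ := hAr a ha b hb c hc x hx (g2' _ (hA ha) _ (hA hb) hab)
      (g2' _ (hA hc) _ (hA hx) hcx) (congrArg d he)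
    exact ⟨congrArg g h1, congrArg g h2⟩

/-- If `ω₂ →^poly (ω₁-cl)²_{<ω-bdd}`, then for every `σ < ω₁`,
`ω₂ →^poly ((ω₁+σ)-cl)²_{<ω-bdd}`. -/
theorem stmt4
    (h : ∀ f : Ordinal → Ordinal → Ordinal,
      (∀ α β : Ordinal, α < β → β < (Cardinal.aleph 2).ord → f α β < (Cardinal.aleph 2).ord) →
      IsNormalColoring f (Cardinal.aleph 2).ord → FinBounded f (Cardinal.aleph 2).ord →
      ∃ A : Set Ordinal, A ⊆ Set.Iio (Cardinal.aleph 2).ord ∧ IsClosedSet A ∧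
        HasOType A (Cardinal.aleph 1).ord ∧ IsRainbow f A) :
    ∀ σ : Ordinal, σ < (Cardinal.aleph 1).ord →
      ∀ f : Ordinal → Ordinal → Ordinal,
      (∀ α β : Ordinal, α < β → β < (Cardinal.aleph 2).ord → f α β < (Cardinal.aleph 2).ord) →
      IsNormalColoring f (Cardinal.aleph 2).ord → FinBounded f (Cardinal.aleph 2).ord →
      ∃ A : Set Ordinal, A ⊆ Set.Iio (Cardinal.aleph 2).ord ∧ IsClosedSet A ∧
        HasOType A ((Cardinal.aleph 1).ord + σ) ∧ IsRainbow f A := by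
  intro σ hσ f hv hn hf
  obtain ⟨A, h1, h2, h3, h4⟩ := core hn hf (shift h f hv hn hf) σ hσ
  exact ⟨A, h1, (closedE_iff ⟨_, fun x hx => (h1 hx).le⟩).2 h2, h3, h4⟩
end

section
/- Let κ, λ, μ be cardinals of uncountable cofinality and let ρ, θ be cardinals. Suppose (a) κ → (μ)²_{λ,<ρ}, i.e., for every f:[κ]²→λ there exists A⊆κ of order type μ with |f''[A]²| < ρ, and (c) μ →^poly (θ)²_{<ρ-t-bdd}. Then κ →^poly (θ)²_{<λ⁺-t-bdd}: every normal <λ⁺-type bounded coloring f:[κ]²→κ admits an f-rainbow set of order type θ. -/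
open Set Cardinal Ordinal

universe u

/-- A set of ordinals of size `< ρ` collapses into some `γ' < ρ.ord`. -/
lemma exists_collapse (R : Set Ordinal.{0}) (ρ : Cardinal.{0})
    (h : Cardinal.mk R < Cardinal.lift.{1, 0} ρ) :
    ∃ γ' < ρ.ord, ∃ r : Ordinal.{0} → Ordinal.{0},
      StrictMonoOn r R ∧ MapsTo r R (Set.Iio γ') := by
  classical
  set o : Ordinal.{1} := Ordinal.type (α := R) (· < ·) with ho
  have h1 : o < Ordinal.lift.{1, 0} ρ.ord := by
    rw [Cardinal.lift_ord, Cardinal.lt_ord, ho, Ordinal.card_type]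
    exact h
  obtain ⟨γ', hγ'⟩ := Ordinal.mem_range_lift_of_le h1.le
  have h2 : ∀ x : R, ∃ y : Ordinal.{0},
      Ordinal.lift.{1, 0} y = Ordinal.typein (α := R) (· < ·) x := fun x =>
    Ordinal.mem_range_lift_of_le ((Ordinal.typein_lt_type (α := R) (· < ·) x).trans h1).le
  choose y hy using h2
  refine ⟨γ', ?_, fun x => if hx : x ∈ R then y ⟨x, hx⟩ else 0, ?_, ?_⟩
  · rw [← hγ'] at h1
    exact Ordinal.lift_lt.1 h1
  · intro a ha b hb hab
    simp only [ha, hb, dif_pos]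
    rw [← Ordinal.lift_lt.{1, 0}, hy, hy]
    exact (Ordinal.typein_lt_typein (α := R) (· < ·)).2 hab
  · intro a ha
    simp only [ha, dif_pos, Set.mem_Iio]
    rw [← Ordinal.lift_lt.{1, 0}, hy, hγ']
    exact Ordinal.typein_lt_type (α := R) (· < ·) _

/-- A set of ordinals of size `≤ c` injects into `c.ord`. -/
lemma exists_inj_ord (R : Set Ordinal.{0}) (c : Cardinal.{0})
    (h : Cardinal.mk R ≤ Cardinal.lift.{1, 0} c) :
    ∃ r : Ordinal.{0} → Ordinal.{0}, InjOn r R ∧ MapsTo r R (Set.Iio c.ord) := by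
  classical
  have h1 : Cardinal.mk R ≤ Cardinal.mk (Set.Iio c.ord) := by
    rw [Cardinal.mk_Iio_ordinal, Cardinal.card_ord]
    exact h
  obtain ⟨e⟩ := h1
  refine ⟨fun x => if hx : x ∈ R then (e ⟨x, hx⟩ : Ordinal) else 0, ?_, ?_⟩
  · intro a ha b hb hab
    simp only [ha, hb, dif_pos] at hab
    have := e.injective (Subtype.ext hab)
    exact congrArg Subtype.val this
  · intro a ha
    simp only [ha, dif_pos]
    exact (e ⟨a, ha⟩).2

/-- Proposition (clmcc)(1): if `κ → (μ)²_{λ,<ρ}` and `μ →^poly (θ)²_{<ρ-t-bdd}`,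
then `κ →^poly (θ)²_{<λ⁺-t-bdd}`. Here `κ, λ, μ` have uncountable cofinality. -/
theorem stmt5 (κ lam μ ρ θ : Cardinal.{0})
    (hκ : ℵ₀ < κ.ord.cof) (hlam : ℵ₀ < lam.ord.cof) (hμ : ℵ₀ < μ.ord.cof)
    (ha : ∀ f : Ordinal.{0} → Ordinal.{0} → Ordinal.{0},
      (∀ α β : Ordinal, α < β → β < κ.ord → f α β < lam.ord) →
      ∃ A : Set Ordinal.{0}, A ⊆ Set.Iio κ.ord ∧ HasOType A μ.ord ∧
        Cardinal.mk ↥{ξ : Ordinal.{0} | ∃ α ∈ A, ∃ β ∈ A, α < β ∧ f α β = ξ} <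
          Cardinal.lift.{1, 0} ρ)
    (hc : ∀ f : Ordinal.{0} → Ordinal.{0} → Ordinal.{0},
      (∀ α β : Ordinal, α < β → β < μ.ord → f α β < μ.ord) →
      IsNormalColoring f μ.ord → TypeBounded f μ.ord ρ.ord →
      ∃ A : Set Ordinal.{0}, A ⊆ Set.Iio μ.ord ∧ HasOType A θ.ord ∧ IsRainbow f A) :
    ∀ f : Ordinal.{0} → Ordinal.{0} → Ordinal.{0},
      (∀ α β : Ordinal, α < β → β < κ.ord → f α β < κ.ord) →
      IsNormalColoring f κ.ord → TypeBounded f κ.ord (Order.succ lam).ord →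
      ∃ A : Set Ordinal.{0}, A ⊆ Set.Iio κ.ord ∧ HasOType A θ.ord ∧ IsRainbow f A := by
  classical
  intro f hf hnorm ⟨γ, hγ, hbd⟩
  have hμω : ℵ₀ ≤ μ := by
    have := hμ.le.trans (Ordinal.cof_le_card _)
    rwa [Cardinal.card_ord] at this
  -- rank functions
  have hE : ∀ β c : Ordinal.{0}, ∃ e : Ordinal.{0} → Ordinal.{0},
      β < κ.ord → (∃ η < β, f η β = c) →
        StrictMonoOn e {ξ | ξ < β ∧ f ξ β = c} ∧
        MapsTo e {ξ | ξ < β ∧ f ξ β = c} (Set.Iio γ) := by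
    intro β c
    by_cases h : β < κ.ord ∧ ∃ η < β, f η β = c
    · obtain ⟨hβ, η, hη, rfl⟩ := h
      obtain ⟨e⟩ := hbd η β hη hβ
      refine ⟨fun x => if hx : x ∈ {ξ | ξ < β ∧ f ξ β = f η β} then (e ⟨x, hx⟩ : Ordinal) else 0,
        fun _ _ => ⟨?_, ?_⟩⟩
      · intro a ha b hb hab
        simp only [dif_pos ha, dif_pos hb]
        have : e ⟨a, ha⟩ < e ⟨b, hb⟩ := e.lt_iff_lt.2 hab
        exact this
      · intro a ha
        simp only [dif_pos ha]
        exact (e ⟨a, ha⟩).2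
    · exact ⟨id, fun h1 h2 => absurd ⟨h1, h2⟩ h⟩
  choose e he using hE
  obtain ⟨i, hi, him⟩ := exists_inj_ord (Set.Iio γ) lam (by
    rw [Cardinal.mk_Iio_ordinal, Cardinal.lift_le, ← Order.lt_succ_iff]
    exact Cardinal.lt_ord.1 hγ)
  have hrk : ∀ α β, α < β → β < κ.ord → e β (f α β) α < γ := fun α β h1 h2 =>
    (he β (f α β) h2 ⟨α, h1, rfl⟩).2 ⟨h1, rfl⟩
  obtain ⟨A, hAκ, ⟨o⟩, hAρ⟩ := ha (fun α β => i (e β (f α β) α))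
    (fun α β h1 h2 => him (hrk α β h1 h2))
  -- the set of ranks used on `A`
  obtain ⟨γ', hγ', r, hr, hrm⟩ := exists_collapse
    {ζ | ∃ α ∈ A, ∃ β ∈ A, α < β ∧ e β (f α β) α = ζ} ρ (by
      refine lt_of_le_of_lt ?_ hAρ
      refine Cardinal.mk_le_of_injective (f := fun x => ⟨i x.1, ?_⟩) ?_
      · obtain ⟨ζ, α, h1, β, h2, h3, h4⟩ := x
        exact ⟨α, h1, β, h2, h3, congrArg i h4⟩
      · rintro ⟨x, α, h1, β, h2, h3, h4⟩ ⟨x', α', h1', β', h2', h3', h4'⟩ hx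
        apply Subtype.ext
        refine hi ?_ ?_ (congrArg Subtype.val hx)
        · exact h4 ▸ hrk α β h3 (hAκ h2)
        · exact h4' ▸ hrk α' β' h3' (hAκ h2'))
  -- enumeration of `A`
  obtain ⟨E, hE⟩ : ∃ E : Ordinal.{0} → Ordinal.{0}, ∀ x (hx : x < μ.ord), E x = o ⟨x, hx⟩ :=
    ⟨fun x => if hx : x < μ.ord then o ⟨x, hx⟩ else 0, fun x hx => dif_pos hx⟩
  have hEA : ∀ x < μ.ord, E x ∈ A := fun x hx => by rw [hE x hx]; exact (o _).2
  have hEm : StrictMonoOn E (Set.Iio μ.ord) := by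
    intro a ha b hb hab
    rw [hE a ha, hE b hb]
    have : o ⟨a, ha⟩ < o ⟨b, hb⟩ := o.lt_iff_lt.2 hab
    exact this
  have hEκ : ∀ x < μ.ord, E x < κ.ord := fun x hx => hAκ (hEA x hx)
  -- recoding of colours
  obtain ⟨j, hj, hjm⟩ := exists_inj_ord
    (Set.range (fun p : Set.Iio μ.ord × Set.Iio μ.ord => f (E p.1) (E p.2))) μ (by
      refine Cardinal.mk_range_le.trans ?_
      rw [Cardinal.mk_prod, Cardinal.mk_Iio_ordinal, Cardinal.card_ord, Cardinal.lift_id,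
        Cardinal.mul_eq_self]
      simpa using hμω)
  have hjmem : ∀ α β, α < β → β < μ.ord → f (E α) (E β) ∈
      Set.range (fun p : Set.Iio μ.ord × Set.Iio μ.ord => f (E p.1) (E p.2)) :=
    fun α β h1 h2 => ⟨(⟨α, h1.trans h2⟩, ⟨β, h2⟩), rfl⟩
  obtain ⟨B, hBμ, ⟨oB⟩, hB⟩ := hc (fun α β => j (f (E α) (E β)))
    (fun α β h1 h2 => hjm (hjmem α β h1 h2))
    (by
      intro α β α' β' h1 h2 h1' h2' heq
      have h3 := hj (hjmem α β h1 h2) (hjmem α' β' h1' h2') heq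
      exact hEm.injOn h2 h2' (hnorm _ _ _ _ (hEm (h1.trans h2) h2 h1) (hEκ β h2)
        (hEm (h1'.trans h2') h2' h1') (hEκ β' h2') h3))
    (by
      refine ⟨γ', hγ', fun η β hη hβ => ?_⟩
      have key : ∀ ξ, ξ < β ∧ j (f (E ξ) (E β)) = j (f (E η) (E β)) →
          E ξ < E β ∧ f (E ξ) (E β) = f (E η) (E β) := fun ξ h =>
        ⟨hEm (h.1.trans hβ) hβ h.1, hj (hjmem ξ β h.1 hβ) (hjmem η β hη hβ) h.2⟩
      have hmem : ∀ ξ, ξ < β ∧ j (f (E ξ) (E β)) = j (f (E η) (E β)) →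
          e (E β) (f (E η) (E β)) (E ξ) ∈
            {ζ | ∃ α ∈ A, ∃ β ∈ A, α < β ∧ e β (f α β) α = ζ} := fun ξ h =>
        ⟨E ξ, hEA ξ (h.1.trans hβ), E β, hEA β hβ, (key ξ h).1, by rw [(key ξ h).2]⟩
      refine ⟨OrderEmbedding.ofStrictMono
        (fun x => ⟨r (e (E β) (f (E η) (E β)) (E x.1)), hrm (hmem x.1 x.2)⟩) ?_⟩
      intro x y hxy
      refine Subtype.mk_lt_mk.2 (hr (hmem x.1 x.2) (hmem y.1 y.2) ?_)
      exact (he (E β) (f (E η) (E β)) (hEκ β hβ)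
        ⟨E η, hEm (hη.trans hβ) hβ hη, rfl⟩).1 (key x.1 x.2) (key y.1 y.2)
        (hEm (x.2.1.trans hβ) (y.2.1.trans hβ) hxy))
  refine ⟨Set.image E B, ?_, ⟨oB.trans ((hEm.mono hBμ).orderIso E B)⟩, ?_⟩
  · rintro _ ⟨b, hb, rfl⟩
    exact hEκ b (hBμ hb)
  · rintro _ ⟨a, ha, rfl⟩ _ ⟨b, hb, rfl⟩ _ ⟨c, hc, rfl⟩ _ ⟨d, hd, rfl⟩ hab hcd heq
    have h1 := (hEm.lt_iff_lt (hBμ ha) (hBμ hb)).1 hab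
    have h2 := (hEm.lt_iff_lt (hBμ hc) (hBμ hd)).1 hcd
    obtain ⟨rfl, rfl⟩ := hB a ha b hb c hc d hd h1 h2 (congrArg j heq)
    exact ⟨rfl, rfl⟩
end

section
/- Let κ, λ, μ be cardinals of uncountable cofinality and let ρ be a cardinal. Suppose (b) κ → (μ-st)²_{λ,<ρ}, i.e., for every f:[κ]²→λ there exists A⊆κ of order type μ, stationary in sup A, with |f''[A]²| < ρ, and (d) μ →^poly (par(<cf(μ)))²_{<ρ-t-bdd}. Then κ →^poly (μ-st)²_{<λ⁺-t-bdd}: every normal <λ⁺-type bounded coloring f:[κ]²→κ admits an f-rainbow set of order type μ that is stationary in its supremum. -/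
open Set Cardinal Ordinal

universe u

def BT {L : Type*} [LinearOrder L] (s : Set L) (b : Ordinal.{0}) : Prop :=
  ∃ h : L → Ordinal.{0}, StrictMonoOn h s ∧ ∀ x ∈ s, h x < b

lemma BT.card_le {L : Type} [LinearOrder L] {s : Set L} {b : Ordinal.{0}} (h : BT s b) :
    #s ≤ b.card := by
  obtain ⟨h, h1, h2⟩ := h
  rw [← Cardinal.mk_toType]
  refine Cardinal.mk_le_of_injective (f := fun x : s => ToType.mk ⟨h x, h2 x x.2⟩) ?_
  intro x y hxy
  have := congrArg Subtype.val (ToType.mk.injective hxy)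
  exact Subtype.ext (h1.injOn x.2 y.2 this)

lemma succ_lt_of_sing {μ m : Cardinal.{0}} (hμ : ℵ₀ ≤ μ) (hs : μ.ord.cof < μ) (hm : m < μ) :
    Order.succ m < μ := by
  rcases (Order.succ_le_of_lt hm).lt_or_eq with h | h
  · exact h
  · exfalso
    have hm0 : ℵ₀ ≤ m := by
      by_contra hlt
      push Not at hlt
      exact absurd ((isSuccLimit_aleph0.succ_lt hlt).trans_le hμ) (by rw [h]; simp)
    have := (isRegular_succ hm0).cof_ord
    rw [h] at this
    exact hs.ne this

lemma greedy {M : Type} [LinearOrder M] [WellFoundedLT M] (T : Type) (N : M → Set M)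
    (hT : ∀ x, #(N x) < #T) :
    ∃ c : M → T, ∀ x, (∀ y < x, y ∈ N x → c y ≠ c x) ∧
      ∀ σ, (∀ y < x, y ∈ N x → c y ≠ σ) →
        #{y | y < x ∧ c y = c x} ≤ #{y | y < x ∧ c y = σ} := by
  classical
  have key : ∀ x (c : ∀ y, y < x → T), ∃ t : T, (∀ y (h : y < x), y ∈ N x → c y h ≠ t) ∧
      ∀ σ, (∀ y (h : y < x), y ∈ N x → c y h ≠ σ) →
        #{y | ∃ h : y < x, c y h = t} ≤ #{y | ∃ h : y < x, c y h = σ} := by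
    intro x c
    have hne : {t : T | ∀ y (h : y < x), y ∈ N x → c y h ≠ t}.Nonempty := by
      by_contra hcon
      rw [Set.not_nonempty_iff_eq_empty] at hcon
      have hh : ∀ t : T, ∃ y : N x, ∃ h : y.1 < x, c y h = t := by
        intro t
        have : t ∉ {t : T | ∀ y (h : y < x), y ∈ N x → c y h ≠ t} := by rw [hcon]; simp
        simp only [mem_ofPred_eq] at this
        push Not at this
        obtain ⟨y, h, hy, e⟩ := this
        exact ⟨⟨y, hy⟩, h, e⟩
      choose f hf hf' using hh
      refine absurd (Cardinal.mk_le_of_injective (f := f) ?_) (not_le.2 (hT x))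
      intro s t hst
      rw [← hf' s, ← hf' t]
      congr 1
      exact congrArg Subtype.val hst
    obtain ⟨t, ht, ht'⟩ := WellFounded.has_min
      (InvImage.wf (fun t : T => #{y | ∃ h : y < x, c y h = t}) Cardinal.lt_wf) _ hne
    exact ⟨t, ht, fun σ hσ => not_lt.1 (ht' σ hσ)⟩
  choose G hG hG' using key
  let c : M → T := (wellFounded_lt (α := M)).fix G
  have hc : ∀ x, c x = G x (fun y _ => c y) := fun x => WellFounded.fix_eq _ _ _
  refine ⟨c, fun x => ⟨fun y hy hN => ?_, fun σ hσ => ?_⟩⟩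
  · rw [hc x]; exact hG x (fun y _ => c y) y hy hN
  · have := hG' x (fun y _ => c y) σ (fun y hy hN => hσ y hy hN)
    rw [← hc x] at this
    simpa only [exists_prop] using this

lemma card_le_succ {M : Type} [LinearOrder M] [WellFoundedLT M] (s : Set M) (m : Cardinal.{0})
    (h : ∀ x ∈ s, #{y | y < x ∧ y ∈ s} ≤ m) : #s ≤ Order.succ m := by
  have : typeLT s ≤ (Order.succ m).ord := by
    refine le_of_forall_lt fun a ha => ?_
    obtain ⟨x, rfl⟩ := typein_surj (· < ·) ha
    rw [lt_ord, Order.lt_succ_iff, card_typein]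
    refine le_trans ?_ (h x x.2)
    refine Cardinal.mk_le_of_injective (f := fun y => ⟨y.1.1, y.2, y.1.2⟩) ?_
    intro y z hyz
    simp only [Subtype.mk.injEq] at hyz
    exact Subtype.ext (Subtype.ext hyz)
  have := Ordinal.card_le_card this
  simpa using this

lemma free_set {M : Type} [LinearOrder M] [WellFoundedLT M] (hM : ℵ₀ ≤ #M)
    (hsing : (#M).ord.cof < #M) (τ : Cardinal.{0}) (hτ : τ < #M) (N : M → Set M)
    (hN : ∀ x, #(N x) ≤ τ) :
    ∃ Y : Set M, #Y = #M ∧ ∀ x ∈ Y, ∀ y ∈ Y, y < x → y ∉ N x := by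
  classical
  set μ := #M with hμ
  wlog hτ' : μ.ord.cof ≤ τ ∧ ℵ₀ ≤ τ generalizing τ
  · refine this (max τ (max μ.ord.cof ℵ₀)) (fun x => (hN x).trans (le_max_left _ _)) ?_
      ⟨(le_max_left _ _).trans (le_max_right _ _), (le_max_right _ _).trans (le_max_right _ _)⟩
    refine max_lt hτ (max_lt hsing ?_)
    rcases hM.lt_or_eq with h | h
    · exact h
    · rw [← h] at hsing; simp at hsing
  obtain ⟨hθ, hτ0⟩ := hτ'
  obtain ⟨T, hT⟩ : ∃ T : Type, #T = Order.succ τ := ⟨_, mk_ord_toType _⟩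
  obtain ⟨c, hc⟩ := greedy (M := M) T N
    (fun x => by rw [hT, Order.lt_succ_iff]; exact hN x)
  by_contra hcon
  push Not at hcon
  have hlt : ∀ σ, #(c ⁻¹' {σ}) < μ := by
    intro σ
    refine lt_of_le_of_ne (mk_set_le _) fun h => ?_
    obtain ⟨x, hx, y, hy, hyx, hyN⟩ := hcon _ h
    exact (hc x).1 y hyx hyN (by rw [hx, hy])
  -- cofinal family of cardinals
  obtain ⟨C, hC, hCc⟩ := Order.exists_cof_eq μ.ord.ToType
  rw [cof_toType] at hCc
  have hsmall : ∃ m < μ, τ < #{σ | #(c ⁻¹' {σ}) ≤ m} := by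
    by_contra hno
    push Not at hno
    have hcov : (Set.univ : Set T) ⊆ ⋃ i : C, {σ | #(c ⁻¹' {σ}) ≤ (ToType.toOrd i.1).1.card} := by
      intro σ _
      have h1 : (#(c ⁻¹' {σ})).ord < μ.ord := ord_lt_ord.2 (hlt σ)
      obtain ⟨i, hi, hle⟩ := hC (ToType.mk ⟨_, h1⟩)
      refine mem_iUnion.2 ⟨⟨i, hi⟩, ?_⟩
      rw [mem_ofPred_eq, ← ord_le]
      have := ToType.mk.symm.monotone hle
      rw [OrderIso.symm_apply_apply] at this
      exact this
    have h2 := (mk_le_mk_of_subset hcov).trans (mk_iUnion_le _)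
    rw [mk_univ, hT] at h2
    have h3 : (⨆ i : C, #{σ | #(c ⁻¹' {σ}) ≤ (ToType.toOrd i.1).1.card}) ≤ τ := by
      refine ciSup_le' fun i => hno _ ?_
      exact lt_ord.1 (ToType.toOrd i.1).2
    have h4 : #C * (⨆ i : C, #{σ | #(c ⁻¹' {σ}) ≤ (ToType.toOrd i.1).1.card}) ≤ τ := by
      refine (mul_le_mul' (hCc.le.trans hθ) h3).trans ?_
      rw [mul_eq_self hτ0]
    exact absurd (h2.trans h4) (not_le.2 (Order.lt_succ τ))
  obtain ⟨m, hm, hQ⟩ := hsmall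
  have hcount : ∀ x, #{y | y < x ∧ c y = c x} ≤ m := by
    intro x
    have : ∃ σ ∈ {σ | #(c ⁻¹' {σ}) ≤ m}, ∀ y < x, y ∈ N x → c y ≠ σ := by
      by_contra hno
      push Not at hno
      have hsub : {σ | #(c ⁻¹' {σ}) ≤ m} ⊆ c '' (N x) := by
        intro σ hσ
        obtain ⟨y, _, hy, e⟩ := hno σ hσ
        exact ⟨y, hy, e⟩
      exact absurd ((mk_le_mk_of_subset hsub).trans (mk_image_le.trans (hN x))) (not_le.2 hQ)
    obtain ⟨σ, hσ, hσ'⟩ := this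
    refine ((hc x).2 σ hσ').trans (le_trans (mk_le_mk_of_subset ?_) hσ)
    rintro y ⟨_, hy⟩
    exact hy
  have hcl : ∀ σ, #(c ⁻¹' {σ}) ≤ Order.succ m := by
    intro σ
    refine card_le_succ _ m fun x hx => ?_
    have := hcount x
    rw [show c x = σ from hx] at this
    exact this
  have h5 : μ ≤ #T * (⨆ σ : T, #(c ⁻¹' {σ})) := by
    rw [hμ, ← mk_univ (α := M), show (Set.univ : Set M) = ⋃ σ, c ⁻¹' {σ} by ext; simp]
    exact mk_iUnion_le _
  have h6 : #T * (⨆ σ : T, #(c ⁻¹' {σ})) < μ := by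
    refine mul_lt_of_lt hM (by rw [hT]; exact succ_lt_of_sing hM hsing hτ) ?_
    exact (ciSup_le' hcl).trans_lt (succ_lt_of_sing hM hsing hm)
  exact absurd h5 (not_le.2 h6)

def HDP (μ : Cardinal.{0}) (b : Ordinal.{0}) : Prop :=
  ∀ (L : Type) [LinearOrder L] [WellFoundedLT L] (α : Type 1) (F : L → L → α),
    (∀ x : L, #(Iio x) < μ) → (∀ η β, BT {ξ | F ξ β = F η β} b) →
    ∃ ι : Type, #ι < μ.ord.cof ∧ ∃ g : L → ι, ∀ ξ ξ' β, ξ < ξ' → ξ' < β →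
      g ξ = g β → g ξ' = g β → F ξ β ≠ F ξ' β

lemma exists_pairing_s6 (μ : Cardinal.{0}) (hμ : ℵ₀ ≤ μ) :
    ∃ J : Ordinal.{0} → Ordinal.{0} → Ordinal.{0},
      (∀ x y, x < μ.ord → y < μ.ord → J x y < μ.ord) ∧
      ∀ x y x' y', x < μ.ord → y < μ.ord → x' < μ.ord → y' < μ.ord → J x y = J x' y' →
        x = x' ∧ y = y' := by
  classical
  obtain ⟨e⟩ : Nonempty (μ.ord.ToType × μ.ord.ToType ≃ μ.ord.ToType) := by
    rw [← Cardinal.eq]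
    simp [mul_eq_self hμ]
  refine ⟨fun x y => if h : x ∈ Iio μ.ord ∧ y ∈ Iio μ.ord then
    (ToType.mk.symm (e (ToType.mk ⟨x, h.1⟩, ToType.mk ⟨y, h.2⟩))).1 else 0, ?_, ?_⟩
  · intro x y hx hy
    beta_reduce
    rw [dif_pos ⟨hx, hy⟩]
    exact (ToType.mk.symm (e (ToType.mk ⟨x, hx⟩, ToType.mk ⟨y, hy⟩))).2
  · intro x y x' y' hx hy hx' hy' h
    beta_reduce at h
    rw [dif_pos ⟨hx, hy⟩, dif_pos ⟨hx', hy'⟩] at h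
    have h1 := e.injective (ToType.mk.symm.injective (Subtype.ext h))
    rw [Prod.mk.injEq] at h1
    exact ⟨congrArg Subtype.val (ToType.mk.injective h1.1),
      congrArg Subtype.val (ToType.mk.injective h1.2)⟩

lemma hdp_of (μ ρ : Cardinal.{0}) (hμ : ℵ₀ < μ.ord.cof)
    (hd : ∀ f : Ordinal.{0} → Ordinal.{0} → Ordinal.{0},
      (∀ α β : Ordinal, α < β → β < μ.ord → f α β < μ.ord) →
      IsNormalColoring f μ.ord → TypeBounded f μ.ord ρ.ord →
      ∃ γ : Ordinal.{0}, γ < (μ.ord.cof).ord ∧ ∃ g : Ordinal.{0} → Ordinal.{0},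
        (∀ ξ : Ordinal, ξ < μ.ord → g ξ < γ) ∧
        ∀ i : Ordinal, i < γ → IsRainbow f {ξ : Ordinal | ξ < μ.ord ∧ g ξ = i})
    (b : Ordinal.{0}) (hb : b < ρ.ord) (hb0 : 0 < b) : HDP μ b := by
  classical
  intro L _ _ α F hL hF
  have hμ0 : ℵ₀ ≤ μ := hμ.le.trans (by simpa using Ordinal.cof_le_card μ.ord)
  rcases isEmpty_or_nonempty L with hE | hN
  · exact ⟨PEmpty, by rw [mk_pempty]; exact aleph0_pos.trans hμ, fun x => hE.elim x, fun x => hE.elim x⟩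
  obtain ⟨J, hJ, hJi⟩ := exists_pairing_s6 μ hμ0
  let φ : L → Ordinal.{0} := fun x => typein (LT.lt : L → L → Prop) x
  have hφ : StrictMono φ := fun x y h => (typein_lt_typein (LT.lt : L → L → Prop)).2 h
  have hφo : ∀ x, φ x < μ.ord := by
    intro x
    rw [lt_ord, card_typein]
    exact hL x
  have hφs : ∀ z ξ, ξ < φ z → ∃ x, φ x = ξ := by
    intro z ξ h
    exact typein_surj (LT.lt : L → L → Prop) (h.trans (typein_lt_type _ z))
  let ψ : Ordinal.{0} → L := Function.invFun φ
  have hψ : ∀ x, ψ (φ x) = x := Function.leftInverse_invFun hφ.injective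
  have hrep : ∀ x z, ∃ r, F r z = F x z ∧ ∀ y, F y z = F x z → r ≤ y := by
    intro x z
    obtain ⟨r, hr, hr'⟩ := WellFounded.has_min (wellFounded_lt (α := L)) {y | F y z = F x z} ⟨x, rfl⟩
    exact ⟨r, hr, fun y hy => not_lt.1 (hr' y hy)⟩
  choose rep hr1 hr2 using hrep
  have hrepeq : ∀ x y z, F x z = F y z → rep x z = rep y z := by
    intro x y z h
    exact le_antisymm (hr2 _ _ _ ((hr1 y z).trans h.symm)) (hr2 _ _ _ ((hr1 x z).trans h))
  let R : Ordinal.{0} → Ordinal.{0} → Ordinal.{0} := fun ξ β =>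
    if β ∈ range φ then φ (rep (ψ ξ) (ψ β)) else ξ
  have hR : ∀ ξ β, ξ < β → R ξ β ≤ ξ := by
    intro ξ β h
    by_cases hβ : β ∈ range φ
    · obtain ⟨z, rfl⟩ := hβ
      obtain ⟨x, rfl⟩ := hφs _ _ h
      simp only [R, mem_range_self, if_true, hψ]
      exact hφ.monotone (hr2 _ _ _ rfl)
    · simp only [R, hβ, if_false, le_refl]
  have hmain := hd (fun ξ β => J (R ξ β) β)
  have H1 : ∀ α β : Ordinal, α < β → β < μ.ord → J (R α β) β < μ.ord := by
    intro ξ β h1 h2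
    exact hJ _ _ ((hR _ _ h1).trans_lt (h1.trans h2)) h2
  have H2 : IsNormalColoring (fun ξ β => J (R ξ β) β) μ.ord := by
    intro ξ β ξ' β' h1 h2 h3 h4 h
    exact (hJi _ _ _ _ ((hR _ _ h1).trans_lt (h1.trans h2)) h2 
      ((hR _ _ h3).trans_lt (h3.trans h4)) h4 h).2
  have H3 : TypeBounded (fun ξ β => J (R ξ β) β) μ.ord ρ.ord := by
    refine ⟨b, hb, fun η β h1 h2 => ?_⟩
    have hR' : ∀ ξ, ξ < β ∧ J (R ξ β) β = J (R η β) β → R ξ β = R η β := by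
      rintro ξ ⟨h3, h4⟩
      exact (hJi _ _ _ _ ((hR _ _ h3).trans_lt (h3.trans h2)) h2 
      ((hR _ _ h1).trans_lt (h1.trans h2)) h2 h4).1
    by_cases hβ : β ∈ range φ
    · obtain ⟨z, rfl⟩ := hβ
      obtain ⟨h, hm, hlt⟩ := hF (ψ η) z
      have hmem : ∀ ξ, ξ < φ z ∧ J (R ξ (φ z)) (φ z) = J (R η (φ z)) (φ z) →
          F (ψ ξ) z = F (ψ η) z := by
        intro ξ hξ
        have := hR' ξ hξ
        simp only [R, mem_range_self, if_true, hψ] at this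
        rw [← hr1 (ψ ξ) z, ← hr1 (ψ η) z, hφ.injective this]
      refine ⟨OrderEmbedding.ofStrictMono (fun x => ⟨h (ψ x.1), hlt _ (hmem _ x.2)⟩) ?_⟩
      rintro ⟨x, hx⟩ ⟨y, hy⟩ hxy
      refine hm (hmem _ hx) (hmem _ hy) ?_
      obtain ⟨x', rfl⟩ := hφs _ _ hx.1
      obtain ⟨y', rfl⟩ := hφs _ _ hy.1
      rw [hψ, hψ]
      exact hφ.lt_iff_lt.1 hxy
    · have hmem : ∀ ξ, ξ < β ∧ J (R ξ β) β = J (R η β) β → ξ = η := by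
        intro ξ hξ
        have := hR' ξ hξ
        simpa only [R, hβ, if_false] using this
      refine ⟨OrderEmbedding.ofStrictMono (fun x => ⟨0, hb0⟩) ?_⟩
      rintro ⟨x, hx⟩ ⟨y, hy⟩ hxy
      rw [Subtype.mk_lt_mk, hmem _ hx, hmem _ hy] at hxy
      exact (lt_irrefl _ hxy).elim
  obtain ⟨γ, hγ, g, hg, hg'⟩ := hmain H1 H2 H3
  refine ⟨γ.ToType, ?_, fun x => ToType.mk ⟨g (φ x), hg _ (hφo x)⟩, ?_⟩
  · rw [mk_toType]; exact lt_ord.1 hγ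
  intro ξ ξ' β h1 h2 e1 e2 e
  have e1' : g (φ ξ) = g (φ β) := congrArg Subtype.val (ToType.mk.injective e1)
  have e2' : g (φ ξ') = g (φ β) := congrArg Subtype.val (ToType.mk.injective e2)
  have := (hg' _ (hg _ (hφo β)) (φ ξ) ⟨hφo _, e1'⟩ (φ β) ⟨hφo _, rfl⟩ (φ ξ') ⟨hφo _, e2'⟩
    (φ β) ⟨hφo _, rfl⟩ (hφ (h1.trans h2)) (hφ h2) (by
      simp only [R, mem_range_self, if_true, hψ, hrepeq _ _ _ e])).1
  exact h1.ne (hφ.injective this)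

lemma IsClubIn.of_isClub {δ : Ordinal.{0}} {C : Set (Iio δ)} (hC : IsClub C) :
    IsClubIn (Subtype.val '' C) δ := by
  refine ⟨?_, ?_, ?_⟩
  · rintro _ ⟨x, _, rfl⟩; exact x.2
  · intro α hα
    obtain ⟨β, hβ, h⟩ := hC.isCofinal ⟨α, hα⟩
    exact ⟨β, ⟨β, hβ, rfl⟩, h⟩
  · intro α hα h0 hs
    refine ⟨⟨α, hα⟩, ?_, rfl⟩
    have hbd : BddAbove (Subtype.val '' C ∩ Iio α) := ⟨α, fun x hx => hx.2.le⟩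
    refine hC.isLUB_mem (t := {x | x ∈ C ∧ x.1 < α}) (fun x hx => hx.1) ?_ ⟨?_, ?_⟩
    · by_contra hne
      apply h0
      rw [← hs]
      have : Subtype.val '' C ∩ Iio α = ∅ := by
        rw [Set.eq_empty_iff_forall_notMem]
        rintro _ ⟨⟨x, hx, rfl⟩, hx'⟩
        exact hne ⟨x, hx, hx'⟩
      rw [this, csSup_empty]; rfl
    · rintro x hx
      exact hx.2.le
    · intro u hu
      change α ≤ u.1
      rw [← hs]
      apply csSup_le'
      rintro _ ⟨⟨x, hx, rfl⟩, hx'⟩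
      exact hu ⟨hx, hx'⟩

lemma IsClubIn.isClub {δ : Ordinal.{0}} {C : Set Ordinal.{0}} (hC : IsClubIn C δ) :
    IsClub {x : Iio δ | x.1 ∈ C} := by
  refine ⟨?_, ?_⟩
  · intro d hd hne _ a ha
    by_cases had : a ∈ d
    · exact hd had
    have hlt : ∀ x ∈ d, x < a := fun x hx => lt_of_le_of_ne (ha.1 hx) (fun h => had (h ▸ hx))
    refine hC.2.2 a.1 a.2 ?_ ?_
    · obtain ⟨x, hx⟩ := hne
      have : x.1 < a.1 := hlt x hx
      exact (this.trans_le' (zero_le)).ne'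
    · apply le_antisymm
      · exact csSup_le' fun x hx => hx.2.le
      · by_contra hh
        push Not at hh
        have : a ≤ ⟨sSup (C ∩ Iio a.1), hh.trans a.2⟩ := by
          apply ha.2
          intro x hx
          exact le_csSup (⟨a.1, fun y hy => hy.2.le⟩) ⟨hd hx, hlt x hx⟩
        exact absurd hh (not_lt.2 this)
  · intro a
    obtain ⟨β, hβ, h⟩ := hC.2.1 a.1 a.2
    exact ⟨⟨β, hC.1 hβ⟩, hβ, h⟩

lemma statIn_iff {δ : Ordinal.{0}} {A : Set Ordinal.{0}} :
    IsStationaryIn A δ ↔ IsStationary {x : Iio δ | x.1 ∈ A} := by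
  constructor
  · intro h C hC
    obtain ⟨_, hx, ⟨x, hx', rfl⟩⟩ := h _ (IsClubIn.of_isClub hC)
    exact ⟨x, hx, hx'⟩
  · intro h C hC
    obtain ⟨x, hx, hx'⟩ := h hC.isClub
    exact ⟨x.1, hx, hx'⟩

lemma cof_Iio_ne {δ : Ordinal.{0}} (hδ : ℵ₀ < δ.cof) : Order.cof (Iio δ) ≠ ℵ₀ := by
  rw [Ordinal.cof_Iio, ← Ordinal.lift_cof]
  intro h
  rw [← Cardinal.lift_aleph0.{1,0}, Cardinal.lift_inj] at h
  exact hδ.ne' h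

lemma IsStationaryIn.mono {δ : Ordinal.{0}} {A B : Set Ordinal.{0}} (h : IsStationaryIn A δ)
    (hAB : A ⊆ B) : IsStationaryIn B δ := fun C hC => (h C hC).mono (inter_subset_inter_left _ hAB)

lemma IsStationaryIn.pigeon {δ : Ordinal.{0}} (hδ : ℵ₀ < δ.cof) {A : Set Ordinal.{0}}
    (h : IsStationaryIn A δ) {ι : Type} (hι : #ι < δ.cof) (B : ι → Set Ordinal.{0})
    (hB : A ⊆ ⋃ i, B i) : ∃ i, IsStationaryIn (B i) δ := by
  have h1 := statIn_iff.1 (h.mono hB)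
  have : {x : Iio δ | x.1 ∈ ⋃ i, B i} = ⋃ i, {x : Iio δ | x.1 ∈ B i} := by
    ext; simp
  rw [this, isStationary_iUnion_iff (cof_Iio_ne hδ)] at h1
  · obtain ⟨i, hi⟩ := h1
    exact ⟨i, statIn_iff.2 hi⟩
  · rw [Ordinal.cof_Iio, ← Ordinal.lift_cof, Cardinal.lift_lift]
    exact Cardinal.lift_lt.2 hι

lemma IsStationaryIn.inter_club {δ : Ordinal.{0}} (hδ : ℵ₀ < δ.cof) {A D : Set Ordinal.{0}}
    (h : IsStationaryIn A δ) (hD : IsClubIn D δ) : IsStationaryIn (A ∩ D) δ := by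
  rw [statIn_iff] at h ⊢
  intro C hC
  obtain ⟨x, h1, h2, h3⟩ := h (hD.isClub.inter (cof_Iio_ne hδ) hC)
  exact ⟨x, ⟨h1, h2⟩, h3⟩

lemma IsStationaryIn.unbdd {δ : Ordinal.{0}} {A : Set Ordinal.{0}}
    (h : IsStationaryIn A δ) (α : Ordinal.{0}) (hα : α < δ) : ∃ β ∈ A, α ≤ β ∧ β < δ := by
  have hcl : IsClubIn (Ico α δ) δ := by
    refine ⟨fun x hx => hx.2, ?_, ?_⟩
    · intro β hβ
      exact ⟨max α β, ⟨le_max_left _ _, max_lt hα hβ⟩, le_max_right _ _⟩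
    · intro β hβ h0 hs
      refine ⟨?_, hβ⟩
      by_contra hlt
      push Not at hlt
      apply h0
      rw [← hs]
      have : Ico α δ ∩ Iio β = ∅ := by
        rw [Set.eq_empty_iff_forall_notMem]
        rintro x ⟨hx, hx'⟩
        exact absurd (hx.1.trans_lt hx') (not_lt.2 hlt.le)
      rw [this, csSup_empty]; rfl
  obtain ⟨x, h1, h2⟩ := h _ hcl
  exact ⟨x, h1, h2⟩

lemma exists_small_club {δ : Ordinal.{0}} (hδ : ℵ₀ < δ.cof) :
    ∃ D, IsClubIn D δ ∧ #D ≤ Cardinal.lift.{1} δ.cof := by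
  obtain ⟨C, hC, hCc⟩ := Order.exists_cof_eq (Iio δ)
  rw [Ordinal.cof_Iio, ← Ordinal.lift_cof] at hCc
  set C0 : Set Ordinal.{0} := Subtype.val '' C with hC0
  have hbd : ∀ α, BddAbove (C0 ∩ Iio α) := fun α => ⟨α, fun x hx => hx.2.le⟩
  have hC0c : #C0 ≤ Cardinal.lift.{1} δ.cof := mk_image_le.trans hCc.le
  have hcof : ∀ α < δ, ∃ c ∈ C0, α ≤ c := by
    intro α hα
    obtain ⟨c, hc, h⟩ := hC ⟨α, hα⟩
    exact ⟨c, ⟨c, hc, rfl⟩, h⟩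
  refine ⟨{α | α < δ ∧ (α ∈ C0 ∨ sSup (C0 ∩ Iio α) = α)}, ⟨fun x hx => hx.1, ?_, ?_⟩, ?_⟩
  · intro α hα
    obtain ⟨c, hc, h⟩ := hcof α hα
    refine ⟨c, ⟨?_, Or.inl hc⟩, h⟩
    obtain ⟨x, _, rfl⟩ := hc
    exact x.2
  · intro α hα h0 hs
    refine ⟨hα, Or.inr ?_⟩
    apply le_antisymm (csSup_le' fun x hx => hx.2.le)
    conv_lhs => rw [← hs]
    apply csSup_le'
    rintro x ⟨⟨h1, h2⟩, h3⟩
    rcases h2 with h2 | h2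
    · exact le_csSup (hbd α) ⟨h2, h3⟩
    · rw [← h2]
      exact csSup_le_csSup' (hbd α) (inter_subset_inter_right _ (Iio_subset_Iio h3.le))
  · have hsub : {α | α < δ ∧ (α ∈ C0 ∨ sSup (C0 ∩ Iio α) = α)} ⊆
        C0 ∪ (fun c => sSup (C0 ∩ Iio c)) '' C0 := by
      rintro α ⟨h1, h2 | h2⟩
      · exact Or.inl h2
      · obtain ⟨c, hc, hlc⟩ : ∃ c ∈ C0, α ≤ c ∧ ∀ c' ∈ C0, α ≤ c' → c ≤ c' := by
          obtain ⟨c, hc, h⟩ := WellFounded.has_min (wellFounded_lt (α := Ordinal.{0}))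
            {c | c ∈ C0 ∧ α ≤ c} (by obtain ⟨c, hc, h⟩ := hcof α h1; exact ⟨c, hc, h⟩)
          exact ⟨c, hc.1, hc.2, fun c' h1 h2 => not_lt.1 (h c' ⟨h1, h2⟩)⟩
        refine Or.inr ⟨c, hc, ?_⟩
        refine Eq.trans ?_ h2
        change sSup (C0 ∩ Iio c) = sSup (C0 ∩ Iio α)
        congr 1
        ext x
        constructor
        · rintro ⟨hx, hx'⟩
          refine ⟨hx, ?_⟩
          by_contra hh
          exact absurd (hlc.2 x hx (not_lt.1 hh)) (not_le.2 hx')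
        · rintro ⟨hx, hx'⟩
          exact ⟨hx, hx'.trans_le hlc.1⟩
    refine (mk_le_mk_of_subset hsub).trans ((mk_union_le _ _).trans ?_)
    refine (add_le_add hC0c (mk_image_le.trans hC0c)).trans ?_
    rw [add_eq_self]
    exact Cardinal.aleph0_le_lift.2 hδ.le

lemma iUnion_lt_of_cof {β : Type} {μ : Cardinal.{0}} (hμ : ℵ₀ ≤ μ) {ι : Type}
    (hι : #ι < μ.ord.cof) (s : ι → Set β) (hs : ∀ i, #(s i) < μ) : #(⋃ i, s i) < μ := by
  refine (mk_iUnion_le _).trans_lt (mul_lt_of_lt hμ ?_ ?_)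
  · exact hι.trans_le (by simpa using Ordinal.cof_le_card μ.ord)
  · exact iSup_lt_of_lt_cof_ord hι hs

lemma core_sing {M : Type} [LinearOrder M] [WellFoundedLT M] (μ : Cardinal.{0}) (hM : #M = μ)
    (hμ : ℵ₀ < μ.ord.cof) (hsing : μ.ord.cof < μ) (hIio : ∀ x : M, #(Iio x) < μ)
    (b : Ordinal.{0}) (hb : b.card < μ) (HD : HDP μ b) {α : Type 1} (F : M → M → α)
    (hF : ∀ η β, BT {ξ | F ξ β = F η β} b) (Stat : Set M → Prop)
    (mono : ∀ X Y, X ⊆ Y → Stat X → Stat Y) (ne : ∀ X, Stat X → X.Nonempty)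
    (pig : ∀ X, Stat X → ∀ ι : Type, #ι < μ.ord.cof → ∀ g : M → ι, ∃ i, Stat {x | x ∈ X ∧ g x = i})
    (S : Set M) (hS : Stat S) (hSc : #S < μ) :
    ∃ X, Stat X ∧ #X = μ ∧ ∀ ξ ∈ X, ∀ ξ' ∈ X, ∀ β ∈ X, ξ < ξ' → ξ' < β → F ξ β ≠ F ξ' β := by
  classical
  have hμ0 : ℵ₀ ≤ μ := hμ.le.trans hsing.le
  have hMinf : Infinite M := by rw [Cardinal.infinite_iff, hM]; exact hμ0
  obtain ⟨s0, hs0⟩ := ne S hS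
  have hcl : ∀ η β, #{ξ | F ξ β = F η β} ≤ b.card := fun η β => (hF η β).card_le
  -- the removed set
  obtain ⟨U, hUdef⟩ : ∃ U : Set M, U = ⋃ t : S, ⋃ t' : S, {y | F y t = F t' t} := ⟨_, rfl⟩
  have hU : #U < μ := by
    rw [hUdef]
    have h1 : ∀ t : S, #(⋃ t' : S, {y | F y t = F t' t}) ≤ #S * b.card := by
      intro t
      refine (mk_iUnion_le _).trans (mul_le_mul_right ?_ _)
      exact ciSup_le' fun t' => hcl _ _
    refine (mk_iUnion_le _).trans_lt (mul_lt_of_lt hμ0 hSc ?_)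
    exact (ciSup_le' h1).trans_lt (mul_lt_of_lt hμ0 hSc hb)
  have hV : #(Uᶜ : Set M) = μ := by
    rw [mk_compl_of_infinite _ (by rw [hM]; exact hU), hM]
  -- the free set
  obtain ⟨N, hNdef⟩ : ∃ N : M → Set M, ∀ y', N y' =
      ⋃ t : S, ({y | F y y' = F t y'} ∪ {y | F y t = F y' t}) := ⟨fun y' => _, fun _ => rfl⟩
  have hN : ∀ y', #(N y') ≤ #S * (b.card + b.card) := by
    intro y'
    rw [hNdef]
    refine (mk_iUnion_le _).trans (mul_le_mul_right ?_ _)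
    exact ciSup_le' fun t' => (mk_union_le _ _).trans (add_le_add (hcl _ _) (hcl _ _))
  have hτ : #S * (b.card + b.card) < μ := mul_lt_of_lt hμ0 hSc (add_lt_of_lt hμ0 hb hb)
  obtain ⟨Y, hYc, hY⟩ := free_set (M := (Uᶜ : Set M)) (by rw [hV]; exact hμ0)
    (by rw [hV]; exact hsing) (#S * (b.card + b.card)) (by rw [hV]; exact hτ)
    (fun y' => Subtype.val ⁻¹' (N y'.1))
    (fun y' => (mk_preimage_of_injective _ _ Subtype.val_injective).trans (hN _))
  rw [hV] at hYc
  have hYU : ∀ y ∈ Y, ∀ t ∈ S, ∀ t' ∈ S, F y.1 t ≠ F t' t := by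
    intro y _ t ht t' ht' h
    apply y.2
    exact hUdef.symm.subset (mem_iUnion.2 ⟨⟨t, ht⟩, mem_iUnion.2 ⟨⟨t', ht'⟩, h⟩⟩)
  have hYN1 : ∀ y' ∈ Y, ∀ y ∈ Y, y < y' → ∀ t ∈ S, F y.1 y'.1 ≠ F t y'.1 := by
    intro y' hy' y hy hlt t ht h
    apply hY y' hy' y hy hlt
    rw [mem_preimage, hNdef]
    exact mem_iUnion.2 ⟨⟨t, ht⟩, Or.inl h⟩
  have hYN2 : ∀ y' ∈ Y, ∀ y ∈ Y, y < y' → ∀ t ∈ S, F y.1 t ≠ F y'.1 t := by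
    intro y' hy' y hy hlt t ht h
    apply hY y' hy' y hy hlt
    rw [mem_preimage, hNdef]
    exact mem_iUnion.2 ⟨⟨t, ht⟩, Or.inr h⟩
  -- the first coloring
  obtain ⟨ι0, hι0, g0, hg0⟩ := HD M α F hIio hF
  -- the lexicographic product
  have hIic : ∀ x : M, #(Iic x) < μ := by
    intro x
    rw [← Iio_insert]
    exact mk_insert_le.trans_lt (add_lt_of_lt hμ0 (hIio x) (one_lt_aleph0.trans_le hμ0))
  have hLle : ∀ x : M, #{p : M ×ₗ S | (ofLex p).1 ≤ x} < μ := by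
    intro x
    refine lt_of_le_of_lt (mk_le_of_injective (β := Iic x × S)
      (f := fun p => (⟨(ofLex p.1).1, p.2⟩, (ofLex p.1).2)) ?_) ?_
    · intro p q h
      rw [Prod.mk.injEq] at h
      apply Subtype.ext
      apply ofLex.injective
      exact Prod.ext (congrArg Subtype.val h.1) h.2
    · rw [mk_prod, Cardinal.lift_id, Cardinal.lift_id]
      exact mul_lt_of_lt hμ0 (hIic x) hSc
  have hLc : #(M ×ₗ S) = μ := by
    change #(M × S) = μ
    rw [mk_prod, Cardinal.lift_id, Cardinal.lift_id, hM]
    refine mul_eq_left hμ0 hSc.le ?_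
    rw [mk_ne_zero_iff]
    exact ⟨⟨s0, hs0⟩⟩
  obtain ⟨e⟩ : Nonempty ((M ×ₗ S) ≃ Y) := by rw [← Cardinal.eq, hLc, hYc]
  obtain ⟨ι1, hι1, g1, hg1⟩ := HD (M ×ₗ S) (M × α)
    (fun ξ β => ((ofLex ξ).1, F (ofLex ξ).2 (if (ofLex ξ).1 = (ofLex β).1 then (ofLex β).2.1
      else (e β).1.1)))
    (fun x => lt_of_le_of_lt (mk_le_mk_of_subset (fun p hp => by
      rcases (Prod.Lex.lt_iff).1 hp with h | h
      · exact h.le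
      · exact h.1.le)) (hLle (ofLex x).1)) (by
      intro η β
      obtain ⟨h, h1, h2⟩ := hF (ofLex η).2 (if (ofLex η).1 = (ofLex β).1 then (ofLex β).2.1
        else (e β).1.1)
      have key : ∀ ξ : M ×ₗ S, ((ofLex ξ).1, F (ofLex ξ).2 (if (ofLex ξ).1 = (ofLex β).1 then
          (ofLex β).2.1 else (e β).1.1)) = ((ofLex η).1, F (ofLex η).2 (if (ofLex η).1 =
          (ofLex β).1 then (ofLex β).2.1 else (e β).1.1)) → (ofLex ξ).1 = (ofLex η).1 ∧
          F (ofLex ξ).2 (if (ofLex η).1 = (ofLex β).1 then (ofLex β).2.1 else (e β).1.1) =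
          F (ofLex η).2 (if (ofLex η).1 = (ofLex β).1 then (ofLex β).2.1 else (e β).1.1) := by
        intro ξ hξ
        rw [Prod.mk.injEq] at hξ
        refine ⟨hξ.1, ?_⟩
        have := hξ.2
        rw [hξ.1] at this
        exact this
      refine ⟨fun ξ => h (ofLex ξ).2, ?_, ?_⟩
      · intro ξ hξ ξ' hξ' hlt
        have k1 := key ξ hξ
        have k2 := key ξ' hξ'
        refine h1 k1.2 k2.2 ?_
        rcases (Prod.Lex.lt_iff).1 hlt with h | h
        · rw [k1.1, k2.1] at h
          exact (lt_irrefl _ h).elim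
        · exact h.2
      · intro ξ hξ
        exact h2 _ (key ξ hξ).2)
  obtain ⟨g, hgdef⟩ : ∃ g : M ×ₗ S → ι1 × ι0, ∀ β, g β = (g1 β, g0 (e β).1.1) :=
    ⟨fun β => _, fun _ => rfl⟩
  have hcofinf : ℵ₀ ≤ μ.ord.cof := hμ.le
  have hι : #(ι1 × ι0) < μ.ord.cof := by
    rw [mk_prod, Cardinal.lift_id, Cardinal.lift_id]
    exact mul_lt_of_lt hcofinf hι1 hι0
  have hblock : ∀ η : M, ∃ n, Stat {x | ∃ hx : x ∈ S, g (toLex (η, ⟨x, hx⟩)) = n} := by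
    intro η
    obtain ⟨n, hn⟩ := pig S hS _ hι (fun x => if hx : x ∈ S then g (toLex (η, ⟨x, hx⟩)) else
      g (toLex (η, ⟨s0, hs0⟩)))
    refine ⟨n, mono _ _ ?_ hn⟩
    rintro x ⟨hx, h⟩
    rw [dif_pos hx] at h
    exact ⟨hx, h⟩
  obtain ⟨n, η, hn, hnc⟩ : ∃ n η, Stat {x | ∃ hx : x ∈ S, g (toLex (η, ⟨x, hx⟩)) = n} ∧
      μ ≤ #{β | g β = n} := by
    by_contra hcon
    push Not at hcon
    let P : ι1 × ι0 → Prop := fun n => ∃ η, Stat {x | ∃ hx : x ∈ S, g (toLex (η, ⟨x, hx⟩)) = n}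
    have hbad : #(⋃ n : {n // P n}, {β | g β = n.1}) < μ := by
      refine iUnion_lt_of_cof hμ0 ((mk_subtype_le _).trans_lt hι) _ ?_
      rintro ⟨n, η, hn⟩
      exact hcon n η hn
    have hpt : ∀ η : M, ∃ x : S, toLex (η, x) ∈ (⋃ n : {n // P n}, {β | g β = n.1}) := by
      intro η
      obtain ⟨n, hn⟩ := hblock η
      obtain ⟨x, hx, h⟩ := ne _ hn
      exact ⟨⟨x, hx⟩, mem_iUnion.2 ⟨⟨n, η, hn⟩, h⟩⟩
    choose p hp using hpt
    refine absurd (mk_le_of_injective (f := fun η : M =>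
      (⟨toLex (η, p η), hp η⟩ : (⋃ n : {n // P n}, {β | g β = n.1}))) ?_) (by
      rw [hM]; exact not_le.2 hbad)
    intro η η' h
    exact congrArg (fun q => (ofLex q.1).1) h
  -- final set
  obtain ⟨Q, hQ⟩ : ∃ Q : Set (M ×ₗ S), Q = {β | g β = n ∧ η < (ofLex β).1} := ⟨_, rfl⟩
  have hQc : #Q = μ := by
    apply le_antisymm
    · rw [← hLc]; exact mk_set_le _
    · by_contra hlt
      push Not at hlt
      refine absurd hnc (not_le.2 ?_)
      refine lt_of_le_of_lt (mk_le_mk_of_subset (t := Q ∪ {p : M ×ₗ S | (ofLex p).1 ≤ η}) ?_)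
        ((mk_union_le _ _).trans_lt (add_lt_of_lt hμ0 hlt (hLle η)))
      intro β hβ
      rcases lt_or_ge η (ofLex β).1 with h | h
      · left; rw [hQ]; exact ⟨hβ, h⟩
      · right; exact h
  obtain ⟨T, hT⟩ : ∃ T : Set M, T = {x | ∃ hx : x ∈ S, g (toLex (η, ⟨x, hx⟩)) = n} := ⟨_, rfl⟩
  obtain ⟨W, hW⟩ : ∃ W : Set M, W = (fun β => (e β).1.1) '' Q := ⟨_, rfl⟩
  have hWc : #W = μ := by
    rw [hW, mk_image_eq, hQc]
    intro β β' h
    exact e.injective (Subtype.ext (Subtype.ext h))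
  refine ⟨T ∪ W, mono _ _ subset_union_left (by rw [hT]; exact hn), ?_, ?_⟩
  · apply le_antisymm
    · rw [← hM]; exact mk_set_le _
    · rw [← hWc]; exact mk_le_mk_of_subset subset_union_right
  have hTm : ∀ x ∈ T, ∃ hx : x ∈ S, g1 (toLex (η, ⟨x, hx⟩)) = n.1 := by
    intro x hx
    rw [hT] at hx
    obtain ⟨h1, h2⟩ := hx
    rw [hgdef] at h2
    exact ⟨h1, congrArg Prod.fst h2⟩
  have hWm : ∀ x ∈ W, ∃ β, (e β).1.1 = x ∧ η < (ofLex β).1 ∧ g1 β = n.1 ∧ g0 x = n.2 := by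
    intro x hx
    rw [hW] at hx
    obtain ⟨β, hβ, rfl⟩ := hx
    rw [hQ] at hβ
    obtain ⟨h1, h2⟩ := hβ
    rw [hgdef] at h1
    exact ⟨β, rfl, h2, congrArg Prod.fst h1, congrArg Prod.snd h1⟩
  intro ξ hξ ξ' hξ' β hβ h1 h2 heq
  rcases hβ with hβ | hβ
  · obtain ⟨kβ, lβ⟩ := hTm β hβ
    rcases hξ with hξ | hξ
    · obtain ⟨kξ, lξ⟩ := hTm ξ hξ
      rcases hξ' with hξ' | hξ'
      · obtain ⟨kξ', lξ'⟩ := hTm ξ' hξ'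
        refine hg1 (toLex (η, ⟨ξ, kξ⟩)) (toLex (η, ⟨ξ', kξ'⟩)) (toLex (η, ⟨β, kβ⟩))
          (Prod.Lex.lt_iff.2 (Or.inr ⟨rfl, h1⟩)) (Prod.Lex.lt_iff.2 (Or.inr ⟨rfl, h2⟩))
          (lξ.trans lβ.symm) (lξ'.trans lβ.symm) ?_
        simpa using heq
      · obtain ⟨q, rfl, _⟩ := hWm ξ' hξ'
        exact hYU _ (e q).2 β kβ ξ kξ heq.symm
    · obtain ⟨q, rfl, _⟩ := hWm ξ hξ
      rcases hξ' with hξ' | hξ'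
      · obtain ⟨kξ', lξ'⟩ := hTm ξ' hξ'
        exact hYU _ (e q).2 β kβ ξ' kξ' heq
      · obtain ⟨q', rfl, _⟩ := hWm ξ' hξ'
        exact hYN2 _ (e q').2 _ (e q).2 h1 β kβ heq
  · obtain ⟨r, rfl, r1, r2, r3⟩ := hWm β hβ
    rcases hξ with hξ | hξ
    · obtain ⟨kξ, lξ⟩ := hTm ξ hξ
      rcases hξ' with hξ' | hξ'
      · obtain ⟨kξ', lξ'⟩ := hTm ξ' hξ'
        refine hg1 (toLex (η, ⟨ξ, kξ⟩)) (toLex (η, ⟨ξ', kξ'⟩)) r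
          (Prod.Lex.lt_iff.2 (Or.inr ⟨rfl, h1⟩)) (Prod.Lex.lt_iff.2 (Or.inl r1))
          (lξ.trans r2.symm) (lξ'.trans r2.symm) ?_
        simpa [r1.ne] using heq
      · obtain ⟨q, rfl, _⟩ := hWm ξ' hξ'
        exact hYN1 _ (e r).2 _ (e q).2 h2 ξ kξ heq.symm
    · obtain ⟨q, rfl, q1, q2, q3⟩ := hWm ξ hξ
      rcases hξ' with hξ' | hξ'
      · obtain ⟨kξ', lξ'⟩ := hTm ξ' hξ'
        exact hYN1 _ (e r).2 _ (e q).2 (h1.trans h2) ξ' kξ' heq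
      · obtain ⟨q', rfl, q1', q2', q3'⟩ := hWm ξ' hξ'
        exact hg0 _ _ _ h1 h2 (q3.trans r3.symm) (q3'.trans r3.symm) heq

lemma small_b {μ : Cardinal.{0}} {b : Ordinal.{0}} (hμ : ℵ₀ < μ.ord.cof) (HD : HDP μ b) :
    b.card < μ := by
  by_contra hcon
  push Not at hcon
  have hμ0 : ℵ₀ ≤ μ := hμ.le.trans (by simpa using Ordinal.cof_le_card μ.ord)
  have hob : μ.ord ≤ b := ord_le.2 hcon
  obtain ⟨ι, hι, g, hg⟩ := HD μ.ord.ToType PUnit.{2} (fun _ _ => PUnit.unit)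
    (fun x => mk_Iio_toType_ord_lt x) (fun _ _ =>
      ⟨fun x => (ToType.mk.symm x).1, fun x _ y _ h => ToType.mk.symm.strictMono h,
        fun x _ => lt_of_lt_of_le (ToType.mk.symm x).2 hob⟩)
  obtain ⟨i, hi⟩ := infinite_pigeonhole g (by rw [mk_ord_toType]; exact hμ0)
    (by rw [mk_ord_toType]; exact hι)
  have hinf : (g ⁻¹' {i}).Infinite := by
    rw [← Set.infinite_coe_iff, Cardinal.infinite_iff, hi, mk_ord_toType]
    exact hμ0
  obtain ⟨t, ht, htc⟩ := hinf.exists_subset_card_eq 3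
  have hm : ∀ k, g (t.orderEmbOfFin htc k) = i := fun k => ht (t.orderEmbOfFin_mem htc k)
  exact hg (t.orderEmbOfFin htc 0) (t.orderEmbOfFin htc 1) (t.orderEmbOfFin htc 2)
    ((t.orderEmbOfFin htc).strictMono (by decide)) ((t.orderEmbOfFin htc).strictMono (by decide))
    ((hm _).trans (hm _).symm) ((hm _).trans (hm _).symm) rfl

lemma exists_inj {γ : Ordinal.{0}} {lam : Cardinal.{0}} (h : γ.card ≤ lam) :
    ∃ j : Ordinal.{0} → Ordinal.{0}, (∀ x < γ, j x < lam.ord) ∧ InjOn j (Iio γ) := by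
  classical
  have h1 : #γ.ToType ≤ #lam.ord.ToType := by rw [mk_toType, mk_ord_toType]; exact h
  obtain ⟨k⟩ := h1
  refine ⟨fun x => if hx : x ∈ Iio γ then (ToType.mk.symm (k (ToType.mk ⟨x, hx⟩))).1 else 0, ?_, ?_⟩
  · intro x hx
    have hx' : x ∈ Iio γ := hx
    beta_reduce
    rw [dif_pos hx']
    exact (ToType.mk.symm (k (ToType.mk ⟨x, hx'⟩))).2
  · intro x hx y hy hxy
    beta_reduce at hxy
    rw [dif_pos hx, dif_pos hy] at hxy
    exact congrArg Subtype.val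
      (ToType.mk.injective (k.injective (ToType.mk.symm.injective (Subtype.ext hxy))))

lemma exists_collapse_s6 {γ : Ordinal.{0}} {ρ : Cardinal.{0}} (B : Set Ordinal.{0})
    (hB : B ⊆ Iio γ) (hBc : #B < Cardinal.lift.{1} ρ) :
    ∃ b < ρ.ord, ∃ c : Ordinal.{0} → Ordinal.{0}, StrictMonoOn c B ∧ ∀ x ∈ B, c x < b := by
  classical
  let B' : Set γ.ToType := {t | (ToType.mk.symm t).1 ∈ B}
  have hmem : ∀ x (hx : x ∈ B), ToType.mk ⟨x, hB hx⟩ ∈ B' := by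
    intro x hx
    change (ToType.mk.symm (ToType.mk _)).1 ∈ B
    rw [OrderIso.symm_apply_apply]
    exact hx
  refine ⟨typeLT B', ?_, fun x => if hx : x ∈ B then
    typein (LT.lt : B' → B' → Prop) ⟨ToType.mk ⟨x, hB hx⟩, hmem x hx⟩ else 0, ?_, ?_⟩
  · rw [lt_ord, card_type]
    rw [← Cardinal.lift_lt.{0, 1}]
    refine lt_of_le_of_lt ?_ hBc
    have := Cardinal.mk_le_of_injective (α := ULift.{1} B') (β := B)
      (f := fun t => ⟨(ToType.mk.symm t.down.1).1, t.down.2⟩) (by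
      intro s t h
      have h1 : (ToType.mk.symm s.down.1).1 = (ToType.mk.symm t.down.1).1 :=
        congrArg (fun z : B => z.1) h
      have h2 := ToType.mk.symm.injective (Subtype.ext h1)
      exact ULift.down_injective (Subtype.ext h2))
    rwa [mk_uLift] at this
  · intro x hx y hy hxy
    beta_reduce
    rw [dif_pos hx, dif_pos hy]
    rw [typein_lt_typein]
    exact ToType.mk.strictMono hxy
  · intro x hx
    beta_reduce
    rw [dif_pos hx]
    exact typein_lt_type _ _

lemma get_A (κ lam μ ρ : Cardinal.{0})
    (hb : ∀ f : Ordinal.{0} → Ordinal.{0} → Ordinal.{0},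
      (∀ α β : Ordinal, α < β → β < κ.ord → f α β < lam.ord) →
      ∃ A : Set Ordinal.{0}, A ⊆ Set.Iio κ.ord ∧ HasOType A μ.ord ∧
        IsStationaryIn A (sSup A) ∧
        Cardinal.mk ↥{ξ : Ordinal.{0} | ∃ α ∈ A, ∃ β ∈ A, α < β ∧ f α β = ξ} <
          Cardinal.lift.{1, 0} ρ)
    (f : Ordinal.{0} → Ordinal.{0} → Ordinal.{0})
    (hf : TypeBounded f κ.ord (Order.succ lam).ord) :
    ∃ A : Set Ordinal.{0}, A ⊆ Set.Iio κ.ord ∧ HasOType A μ.ord ∧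
        IsStationaryIn A (sSup A) ∧ ∃ b < ρ.ord, ∀ η ∈ A, ∀ β ∈ A, η < β →
          BT {ξ : Ordinal | ξ ∈ A ∧ ξ < β ∧ f ξ β = f η β} b := by
  classical
  obtain ⟨γ, hγ, hγ'⟩ := hf
  have hγl : γ.card ≤ lam := Order.lt_succ_iff.1 (lt_ord.1 hγ)
  obtain ⟨j, hj, hji⟩ := exists_inj hγl
  have hh : ∀ β c, ∃ h : Ordinal.{0} → Ordinal.{0}, β < κ.ord →
      StrictMonoOn h {ξ | ξ < β ∧ f ξ β = c} ∧ ∀ ξ, ξ < β → f ξ β = c → h ξ < γ := by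
    intro β c
    by_cases hex : β < κ.ord ∧ ∃ η, η < β ∧ f η β = c
    · obtain ⟨hβ, η, hη, rfl⟩ := hex
      obtain ⟨e⟩ := hγ' η β hη hβ
      refine ⟨fun ξ => if h : ξ ∈ {ξ | ξ < β ∧ f ξ β = f η β} then (e ⟨ξ, h⟩).1 else 0,
        fun _ => ⟨?_, ?_⟩⟩
      · intro x hx y hy hxy
        beta_reduce
        rw [dif_pos hx, dif_pos hy]
        exact e.strictMono hxy
      · intro x hx hx'
        beta_reduce
        have hx2 : x ∈ {ξ | ξ < β ∧ f ξ β = f η β} := ⟨hx, hx'⟩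
        rw [dif_pos hx2]
        exact (e ⟨x, hx2⟩).2
    · refine ⟨fun _ => 0, fun hβ => ⟨?_, ?_⟩⟩
      · intro x hx
        exact (hex ⟨hβ, x, hx⟩).elim
      · intro x hx hx'
        exact (hex ⟨hβ, x, hx, hx'⟩).elim
  choose h hh' using hh
  obtain ⟨A, hA, hAo, hAs, hAc⟩ := hb (fun ξ β => j (h β (f ξ β) ξ))
    (fun ξ β h1 h2 => hj _ ((hh' β _ h2).2 ξ h1 rfl))
  refine ⟨A, hA, hAo, hAs, ?_⟩
  let B : Set Ordinal.{0} := {x | ∃ ξ ∈ A, ∃ β ∈ A, ξ < β ∧ h β (f ξ β) ξ = x}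
  have hB : B ⊆ Iio γ := by
    rintro _ ⟨ξ, h1, β, h2, h3, rfl⟩
    exact (hh' β _ (hA h2)).2 ξ h3 rfl
  have hBc : #B < Cardinal.lift.{1} ρ := by
    rw [← mk_image_eq_of_injOn j B (hji.mono hB)]
    refine lt_of_le_of_lt (mk_le_mk_of_subset ?_) hAc
    rintro _ ⟨_, ⟨ξ, h1, β, h2, h3, rfl⟩, rfl⟩
    exact ⟨ξ, h1, β, h2, h3, rfl⟩
  obtain ⟨b, hbρ, c, hc1, hc2⟩ := exists_collapse_s6 B hB hBc
  refine ⟨b, hbρ, fun η hη β hβ hlt => ⟨fun ξ => c (h β (f η β) ξ), ?_, ?_⟩⟩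
  · rintro x ⟨hx1, hx2, hx3⟩ y ⟨hy1, hy2, hy3⟩ hxy
    refine hc1 ⟨x, hx1, β, hβ, hx2, ?_⟩ ⟨y, hy1, β, hβ, hy2, ?_⟩
      ((hh' β _ (hA hβ)).1 ⟨hx2, hx3⟩ ⟨hy2, hy3⟩ hxy)
    · rw [hx3]
    · rw [hy3]
  · rintro x ⟨hx1, hx2, hx3⟩
    exact hc2 _ ⟨x, hx1, β, hβ, hx2, by rw [hx3]⟩

lemma hasOType_image {μ : Cardinal.{0}} (a : μ.ord.ToType → Ordinal.{0}) (ha : StrictMono a)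
    (X : Set μ.ord.ToType) (hX : #X = μ) : HasOType (a '' X) μ.ord := by
  have h1 : typeLT X = typeLT μ.ord.ToType := by
    apply le_antisymm
    · exact (OrderEmbedding.subtype (· ∈ X)).ltEmbedding.ordinal_type_le
    · rw [type_toType, ord_le, card_type, hX]
  obtain ⟨r⟩ := type_eq.1 h1
  exact ⟨ToType.mk.trans ((OrderIso.ofRelIsoLT r).symm.trans (ha.strictMonoOn X).orderIso)⟩

/-- Proposition (clmcc)(2): if `κ → (μ-st)²_{λ,<ρ}` and
`μ →^poly (par(<cf μ))²_{<ρ-t-bdd}`, then `κ →^poly (μ-st)²_{<λ⁺-t-bdd}`.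
Here `κ, λ, μ` have uncountable cofinality. -/
theorem stmt6 (κ lam μ ρ : Cardinal.{0})
    (hκ : ℵ₀ < κ.ord.cof) (hlam : ℵ₀ < lam.ord.cof) (hμ : ℵ₀ < μ.ord.cof)
    (hb : ∀ f : Ordinal.{0} → Ordinal.{0} → Ordinal.{0},
      (∀ α β : Ordinal, α < β → β < κ.ord → f α β < lam.ord) →
      ∃ A : Set Ordinal.{0}, A ⊆ Set.Iio κ.ord ∧ HasOType A μ.ord ∧
        IsStationaryIn A (sSup A) ∧
        Cardinal.mk ↥{ξ : Ordinal.{0} | ∃ α ∈ A, ∃ β ∈ A, α < β ∧ f α β = ξ} <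
          Cardinal.lift.{1, 0} ρ)
    (hd : ∀ f : Ordinal.{0} → Ordinal.{0} → Ordinal.{0},
      (∀ α β : Ordinal, α < β → β < μ.ord → f α β < μ.ord) →
      IsNormalColoring f μ.ord → TypeBounded f μ.ord ρ.ord →
      ∃ γ : Ordinal.{0}, γ < (μ.ord.cof).ord ∧ ∃ g : Ordinal.{0} → Ordinal.{0},
        (∀ ξ : Ordinal, ξ < μ.ord → g ξ < γ) ∧
        ∀ i : Ordinal, i < γ → IsRainbow f {ξ : Ordinal | ξ < μ.ord ∧ g ξ = i}) :
    ∀ f : Ordinal.{0} → Ordinal.{0} → Ordinal.{0},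
      (∀ α β : Ordinal, α < β → β < κ.ord → f α β < κ.ord) →
      IsNormalColoring f κ.ord → TypeBounded f κ.ord (Order.succ lam).ord →
      ∃ A : Set Ordinal.{0}, A ⊆ Set.Iio κ.ord ∧ HasOType A μ.ord ∧
        IsStationaryIn A (sSup A) ∧ IsRainbow f A := by
  classical
  intro f _ hfn hft
  have hθμ : μ.ord.cof ≤ μ := by simpa using Ordinal.cof_le_card μ.ord
  have hμ0 : ℵ₀ ≤ μ := hμ.le.trans hθμ
  obtain ⟨A, hA, ⟨e⟩, hAs, b, hbρ, hbt⟩ := get_A κ lam μ ρ hb f hft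
  let M := μ.ord.ToType
  have hM : #M = μ := mk_ord_toType μ
  have hnomax : NoMaxOrder M := Cardinal.noMaxOrder hμ0
  have hMne : Nonempty M := by
    rw [← mk_ne_zero_iff, hM]; exact (aleph0_pos.trans_le hμ0).ne'
  obtain ⟨a, ha, haA⟩ : ∃ a : M → Ordinal.{0}, StrictMono a ∧ range a = A := by
    refine ⟨fun x => (e (ToType.mk.symm x)).1, fun x y h => e.strictMono (ToType.mk.symm.strictMono h), ?_⟩
    ext y
    constructor
    · rintro ⟨x, rfl⟩
      exact (e (ToType.mk.symm x)).2
    · intro hy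
      refine ⟨ToType.mk (e.symm ⟨y, hy⟩), ?_⟩
      beta_reduce
      rw [OrderIso.symm_apply_apply, OrderIso.apply_symm_apply]
  have haM : ∀ x, a x ∈ A := fun x => haA ▸ mem_range_self x
  obtain ⟨δ, hδ⟩ : ∃ δ, δ = sSup A := ⟨_, rfl⟩
  have hbdd : BddAbove A := ⟨κ.ord, fun x hx => (hA hx).le⟩
  have hcofM : Order.cof M = μ.ord.cof := cof_toType _
  have hδc : δ.cof = μ.ord.cof := by
    rw [hδ, ← haA, sSup_range, cof_iSup ha, hcofM]
  have hδ0 : ℵ₀ < δ.cof := by rw [hδc]; exact hμ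
  have hlt : ∀ x, a x < δ := by
    intro x
    obtain ⟨y, hy⟩ := exists_gt x
    rw [hδ]
    exact (ha hy).trans_le (le_csSup hbdd (haM y))
  rw [← hδ] at hAs
  have hIio : ∀ x : M, #(Iio x) < μ := fun x => mk_Iio_toType_ord_lt x
  -- transferred classes
  have hcl : ∀ η β : M, η < β → BT {ξ : M | ξ < β ∧ f (a ξ) (a β) = f (a η) (a β)} b := by
    intro η β h
    obtain ⟨h0, h1, h2⟩ := hbt (a η) (haM _) (a β) (haM _) (ha h)
    refine ⟨fun ξ => h0 (a ξ), ?_, ?_⟩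
    · rintro x ⟨hx, hx'⟩ y ⟨hy, hy'⟩ hxy
      exact h1 ⟨haM _, ha hx, hx'⟩ ⟨haM _, ha hy, hy'⟩ (ha hxy)
    · rintro x ⟨hx, hx'⟩
      exact h2 _ ⟨haM _, ha hx, hx'⟩
  have hb0 : 0 < b := by
    obtain ⟨x⟩ := hMne
    obtain ⟨y, hy⟩ := exists_gt x
    obtain ⟨h0, _, h2⟩ := hcl x y hy
    exact (zero_le).trans_lt (h2 x ⟨hy, rfl⟩)
  have HD : HDP μ b := hdp_of μ ρ hμ hd b hbρ hb0
  have hbμ : b.card < μ := small_b hμ HD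
  let F : M → M → Ordinal.{0} ⊕ M := fun ξ β =>
    if ξ < β then Sum.inl (f (a ξ) (a β)) else Sum.inr ξ
  have hF : ∀ η β, BT {ξ | F ξ β = F η β} b := by
    intro η β
    by_cases h : η < β
    · obtain ⟨h0, h1, h2⟩ := hcl η β h
      have hsub : {ξ | F ξ β = F η β} ⊆ {ξ : M | ξ < β ∧ f (a ξ) (a β) = f (a η) (a β)} := by
        intro ξ hξ
        change F ξ β = F η β at hξ
        by_cases h' : ξ < β
        · simp only [F, h, h', if_true, Sum.inl.injEq] at hξ
          exact ⟨h', hξ⟩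
        · simp only [F, h, h', if_true, if_false, reduceCtorEq] at hξ
      exact ⟨h0, h1.mono hsub, fun x hx => h2 x (hsub hx)⟩
    · have hsub : ∀ ξ, F ξ β = F η β → ξ = η := by
        intro ξ hξ
        by_cases h' : ξ < β
        · simp only [F, h, h', if_true, if_false, reduceCtorEq] at hξ
        · simpa only [F, h, h', if_false, Sum.inr.injEq] using hξ
      refine ⟨fun _ => 0, ?_, fun _ _ => hb0⟩
      intro x hx y hy hxy
      rw [hsub x hx, hsub y hy] at hxy
      exact (lt_irrefl _ hxy).elim
  let Stat : Set M → Prop := fun X => IsStationaryIn (a '' X) δ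
  have mono : ∀ X Y, X ⊆ Y → Stat X → Stat Y := fun X Y h hX => hX.mono (image_mono h)
  have unb : ∀ X, Stat X → ∀ x, ∃ y ∈ X, x ≤ y := by
    intro X hX x
    obtain ⟨_, ⟨y, hy, rfl⟩, h, _⟩ := hX.unbdd (a x) (hlt x)
    exact ⟨y, hy, ha.le_iff_le.1 h⟩
  have ne : ∀ X, Stat X → X.Nonempty := by
    intro X hX
    obtain ⟨x⟩ := hMne
    obtain ⟨y, hy, _⟩ := unb X hX x
    exact ⟨y, hy⟩
  have pig : ∀ X, Stat X → ∀ ι : Type, #ι < μ.ord.cof → ∀ g : M → ι,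
      ∃ i, Stat {x | x ∈ X ∧ g x = i} := by
    intro X hX ι hι g
    refine hX.pigeon hδ0 (by rw [hδc]; exact hι) (fun i => a '' {x | x ∈ X ∧ g x = i}) ?_
    rintro _ ⟨x, hx, rfl⟩
    exact mem_iUnion.2 ⟨g x, x, ⟨hx, rfl⟩, rfl⟩
  have huniv : Stat univ := by
    change IsStationaryIn (a '' univ) δ
    rw [image_univ, haA]
    exact hAs
  have hmain : ∃ X, Stat X ∧ #X = μ ∧
      ∀ ξ ∈ X, ∀ ξ' ∈ X, ∀ β ∈ X, ξ < ξ' → ξ' < β → F ξ β ≠ F ξ' β := by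
    rcases hθμ.lt_or_eq with hs | hr
    · obtain ⟨D, hD, hDc⟩ := exists_small_club hδ0
      refine core_sing μ hM hμ hs hIio b hbμ HD F hF Stat mono ne pig {x | a x ∈ D} ?_ ?_
      · refine (hAs.inter_club hδ0 hD).mono ?_
        rintro y ⟨hy, hyD⟩
        rw [← haA] at hy
        obtain ⟨x, rfl⟩ := hy
        exact ⟨x, hyD, rfl⟩
      · refine lt_of_le_of_lt ?_ hs
        rw [hδc] at hDc
        rw [← Cardinal.lift_le.{1}]
        refine le_trans ?_ hDc
        have := Cardinal.mk_le_of_injective (α := ULift.{1} {x | a x ∈ D}) (β := D)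
          (f := fun t => ⟨a t.down.1, t.down.2⟩) (by
          intro s t h
          exact ULift.down_injective (Subtype.ext (ha.injective (congrArg Subtype.val h))))
        rwa [mk_uLift] at this
    · obtain ⟨ι, hι, g, hg⟩ := HD M _ F hIio hF
      obtain ⟨i, hi⟩ := pig _ huniv ι hι g
      refine ⟨_, hi, ?_, ?_⟩
      · apply le_antisymm
        · exact (mk_set_le _).trans hM.le
        · conv_lhs => rw [← hr, ← hcofM]
          exact Order.cof_le (fun x => unb _ hi x)
      · rintro ξ ⟨_, h1⟩ ξ' ⟨_, h2⟩ β ⟨_, h3⟩ h4 h5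
        exact hg ξ ξ' β h4 h5 (h1.trans h3.symm) (h2.trans h3.symm)
  obtain ⟨X, hX, hXc, hXr⟩ := hmain
  have hsub : a '' X ⊆ A := by
    rintro _ ⟨x, _, rfl⟩
    exact haM x
  have hsup : sSup (a '' X) = δ := by
    rw [hδ]
    apply le_antisymm
    · exact csSup_le_csSup' hbdd hsub
    · apply csSup_le'
      intro y hy
      rw [← haA] at hy
      obtain ⟨x, rfl⟩ := hy
      obtain ⟨z, hz, hxz⟩ := unb X hX x
      exact (ha.monotone hxz).trans (le_csSup (hbdd.mono hsub) ⟨z, hz, rfl⟩)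
  refine ⟨a '' X, hsub.trans hA, hasOType_image a ha X hXc, by rw [hsup]; exact hX, ?_⟩
  have hne : ∀ ξ ∈ X, ∀ ξ' ∈ X, ∀ β ∈ X, ξ < ξ' → ξ' < β → f (a ξ) (a β) ≠ f (a ξ') (a β) := by
    intro ξ h1 ξ' h2 β h3 h4 h5 h
    refine hXr ξ h1 ξ' h2 β h3 h4 h5 ?_
    simp only [F, h5, h4.trans h5, if_true, h]
  rintro _ ⟨α, hα, rfl⟩ _ ⟨β, hβ, rfl⟩ _ ⟨γ, hγ, rfl⟩ _ ⟨ε, hε, rfl⟩ h1 h2 h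
  have hβε := ha.injective (hfn _ _ _ _ h1 (hA (haM _)) h2 (hA (haM _)) h)
  subst hβε
  refine ⟨?_, rfl⟩
  rw [ha.lt_iff_lt] at h1 h2
  rcases lt_trichotomy α γ with h3 | h3 | h3
  · exact (hne α hα γ hγ β hβ h3 h2 h).elim
  · rw [h3]
  · exact (hne γ hγ α hα β hβ h3 h1 h.symm).elim
end

section
/- Assume (i) for every f:[ω₂]²→ω₁ there exists A⊆ω₂ of order type ω₁ such that f''[A]² is countable (a consequence of Chang's Conjecture), and (ii) ω₁ →^poly (ω₁)²_{<ω₁-t-bdd}. Then ω₂ →^poly (ω₁)²_{ω-bdd}: every normal ω-bounded coloring f:[ω₂]²→ω₂ admits an f-rainbow set of order type ω₁. -/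
open Set Cardinal Ordinal

universe u

universe v w x

theorem aux_iso_of_lift {a : Ordinal.{v}} {b : Ordinal.{w}}
    (h : Ordinal.lift.{w} a = Ordinal.lift.{v} b) : Nonempty (Set.Iio a ≃o Set.Iio b) := by
  have h2 : Ordinal.lift.{max (v+1) (w+1)} (typeLT (Set.Iio a)) = Ordinal.lift.{max (v+1) (w+1)} (typeLT (Set.Iio b)) := by
    rw [Ordinal.type_lt_Iio, Ordinal.type_lt_Iio]
    have := congrArg (Ordinal.lift.{max (v+1) (w+1)}) h
    simpa [Ordinal.lift_lift] using this
  obtain ⟨e⟩ := Ordinal.lift_type_eq.{v+1, w+1, max (v+1) (w+1)}.1 h2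
  exact ⟨OrderIso.ofRelIsoLT e⟩

theorem aux_rank (S : Set Ordinal.{v}) (hS : S.Countable) :
    ∃ γ : Ordinal.{w}, γ < (Cardinal.aleph 1).ord ∧ Nonempty (S ↪o Set.Iio γ) := by
  have h1 : typeLT S < (Cardinal.aleph 1).ord := by
    rw [Cardinal.lt_ord, Ordinal.card_type, Cardinal.lt_aleph_one_iff]
    exact Cardinal.le_aleph0_iff_set_countable.2 hS
  have h2 : Ordinal.lift.{w} (typeLT S) < Ordinal.lift.{v+1} (Cardinal.aleph.{w} 1).ord := by
    have := Ordinal.lift_lt.{w, v+1}.2 h1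
    simpa using this
  obtain ⟨γ, hγ⟩ := Ordinal.mem_range_lift_of_le h2.le
  refine ⟨γ, ?_, ?_⟩
  · rw [← hγ] at h2
    exact Ordinal.lift_lt.1 h2
  · have h3 : Ordinal.lift.{max (v+1) (w+1)} (typeLT S) = Ordinal.lift.{max (v+1) (w+1)} (typeLT (Set.Iio γ)) := by
      rw [Ordinal.type_lt_Iio]
      have := congrArg (Ordinal.lift.{max (v+1) (w+1)}) hγ
      simpa [Ordinal.lift_lift] using this.symm
    obtain ⟨e⟩ := Ordinal.lift_type_eq.{v+1, w+1, max (v+1) (w+1)}.1 h3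
    exact ⟨(OrderIso.ofRelIsoLT e).toOrderEmbedding⟩

theorem aux_iso1 : Nonempty (Set.Iio (Cardinal.aleph.{v} 1).ord ≃o
    Set.Iio (Cardinal.aleph.{w} 1).ord) := aux_iso_of_lift (by simp)

theorem aux_iso2 : Nonempty (Set.Iio (Cardinal.aleph.{v} 2).ord ≃o
    Set.Iio (Cardinal.aleph.{w} 2).ord) := aux_iso_of_lift (by simp)

theorem aux_total {o : Ordinal.{v}} {T : Set Ordinal.{w}} (e : Set.Iio o ↪o T) :
    ∃ H : Ordinal.{v} → Ordinal.{w}, StrictMonoOn H (Set.Iio o) ∧ ∀ x < o, H x ∈ T := by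
  classical
  refine ⟨fun x => if h : x < o then (e ⟨x, h⟩ : Ordinal) else 0, ?_, ?_⟩
  · intro x hx y hy hxy
    have hx' : x < o := hx
    have hy' : y < o := hy
    have h3 : e ⟨x, hx'⟩ < e ⟨y, hy'⟩ := e.lt_iff_lt.2 hxy
    simp only [dif_pos hx', dif_pos hy']
    exact h3
  · intro x hx
    simp [hx]

theorem aux_code (F : Ordinal.{v} → Ordinal.{v} → Ordinal.{w}) :
    ∃ c : Ordinal.{w} → Ordinal.{x}, (∀ y, c y < (Cardinal.aleph 1).ord) ∧
      Set.InjOn c {y | ∃ a < (Cardinal.aleph.{v} 1).ord, ∃ b < (Cardinal.aleph.{v} 1).ord,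
        F a b = y} := by
  classical
  let W := Set.Iio (Cardinal.aleph.{v} 1).ord
  have hcard : Cardinal.lift.{x+1} #(W × W) ≤
      Cardinal.lift.{v+1} #(Set.Iio (Cardinal.aleph.{x} 1).ord) := by
    simp [W, Cardinal.mk_Iio_ordinal]
  obtain ⟨p⟩ := Cardinal.lift_mk_le'.1 hcard
  have hpos : (0 : Ordinal.{x}) < (Cardinal.aleph 1).ord := by
    rw [Cardinal.lt_ord]; simp
  have hs : ∀ y : Ordinal.{w}, ∃ z : Ordinal.{x}, z < (Cardinal.aleph 1).ord ∧
      ((∃ a < (Cardinal.aleph.{v} 1).ord, ∃ b < (Cardinal.aleph.{v} 1).ord, F a b = y) →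
        ∃ q : W × W, F q.1 q.2 = y ∧ (p q : Ordinal) = z) := by
    intro y
    by_cases h : ∃ a < (Cardinal.aleph.{v} 1).ord, ∃ b < (Cardinal.aleph.{v} 1).ord, F a b = y
    · obtain ⟨a, ha, b, hb, h⟩ := h
      exact ⟨p (⟨a, ha⟩, ⟨b, hb⟩), (p _).2, fun _ => ⟨_, h, rfl⟩⟩
    · exact ⟨0, hpos, fun h' => absurd h' h⟩
  choose c hc hc' using hs
  refine ⟨c, hc, ?_⟩
  intro y hy z hz hyz
  obtain ⟨q, hq, hq'⟩ := hc' y hy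
  obtain ⟨r, hr, hr'⟩ := hc' z hz
  have : p q = p r := Subtype.ext (by rw [hq', hr', hyz])
  rw [← hq, ← hr, p.injective this]

/-- Corollary (Changvanilla): if every `f : [ω₂]² → ω₁` has a subset of order type `ω₁`
with countable color image (a consequence of Chang's Conjecture), and
`ω₁ →^poly (ω₁)²_{<ω₁-t-bdd}` holds, then `ω₂ →^poly (ω₁)²_{ω-bdd}`. -/
theorem stmt7
    (hcc : ∀ f : Ordinal → Ordinal → Ordinal,
      (∀ α β : Ordinal, α < β → β < (Cardinal.aleph 2).ord → f α β < (Cardinal.aleph 1).ord) →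
      ∃ A : Set Ordinal, A ⊆ Set.Iio (Cardinal.aleph 2).ord ∧
        HasOType A (Cardinal.aleph 1).ord ∧
        {ξ : Ordinal | ∃ α ∈ A, ∃ β ∈ A, α < β ∧ f α β = ξ}.Countable)
    (hpoly : ∀ f : Ordinal → Ordinal → Ordinal,
      (∀ α β : Ordinal, α < β → β < (Cardinal.aleph 1).ord → f α β < (Cardinal.aleph 1).ord) →
      IsNormalColoring f (Cardinal.aleph 1).ord →
      TypeBounded f (Cardinal.aleph 1).ord (Cardinal.aleph 1).ord →
      ∃ A : Set Ordinal, A ⊆ Set.Iio (Cardinal.aleph 1).ord ∧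
        HasOType A (Cardinal.aleph 1).ord ∧ IsRainbow f A) :
    ∀ f : Ordinal → Ordinal → Ordinal,
      (∀ α β : Ordinal, α < β → β < (Cardinal.aleph 2).ord → f α β < (Cardinal.aleph 2).ord) →
      IsNormalColoring f (Cardinal.aleph 2).ord → OmegaBounded f (Cardinal.aleph 2).ord →
      ∃ A : Set Ordinal, A ⊆ Set.Iio (Cardinal.aleph 2).ord ∧
        HasOType A (Cardinal.aleph 1).ord ∧ IsRainbow f A := by
  intro f _ hnorm hbdd
  classical
  obtain ⟨e2⟩ := aux_iso2
  obtain ⟨E, hE, hE2⟩ := aux_total e2.toOrderEmbedding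
  have hcount : ∀ α β, β < (Cardinal.aleph 2).ord →
      {ξ | ξ < E β ∧ f ξ (E β) = f (E α) (E β)}.Countable := by
    intro α β hβ
    have := (hbdd (f (E α) (E β))).image Prod.fst
    refine this.mono ?_
    rintro ξ ⟨h1, h2⟩
    exact ⟨(ξ, E β), ⟨h1, hE2 β hβ, h2⟩, rfl⟩
  have hg : ∀ α β, ∃ γ, β < (Cardinal.aleph 2).ord → γ < (Cardinal.aleph 1).ord ∧
      Nonempty ({ξ | ξ < E β ∧ f ξ (E β) = f (E α) (E β)} ↪o Set.Iio γ) := by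
    intro α β
    by_cases hβ : β < (Cardinal.aleph 2).ord
    · obtain ⟨γ, h⟩ := aux_rank _ (hcount α β hβ)
      exact ⟨γ, fun _ => h⟩
    · exact ⟨0, fun h => absurd h hβ⟩
  choose g hg using hg
  obtain ⟨A, hA, ⟨i⟩, hC⟩ := hcc g (fun α β _ hβ => (hg α β hβ).1)
  -- a uniform bound for the order types
  have hC1 : ∀ ξ ∈ {ξ | ∃ α ∈ A, ∃ β ∈ A, α < β ∧ g α β = ξ}, ξ < (Cardinal.aleph 1).ord := by
    rintro ξ ⟨α, _, β, hβ, _, rfl⟩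
    exact (hg α β (hA hβ)).1
  obtain ⟨γ₀, hγ₀, hle⟩ : ∃ γ₀ < (Cardinal.aleph 1).ord,
      ∀ ξ ∈ {ξ | ∃ α ∈ A, ∃ β ∈ A, α < β ∧ g α β = ξ}, ξ ≤ γ₀ := by
    generalize {ξ | ∃ α ∈ A, ∃ β ∈ A, α < β ∧ g α β = ξ} = C at hC hC1
    have : Countable C := hC
    refine ⟨⨆ c : C, (c : Ordinal), ?_, ?_⟩
    · rw [Cardinal.ord_aleph]
      exact Ordinal.iSup_lt_omega_one (fun c => by
        have := hC1 c c.2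
        rwa [Cardinal.ord_aleph] at this)
    · intro ξ hξ
      refine le_ciSup (f := fun c : C => (c : Ordinal)) ⟨(Cardinal.aleph 1).ord, ?_⟩ ⟨ξ, hξ⟩
      rintro _ ⟨c, rfl⟩
      exact (hC1 c c.2).le
  have hγc : (Set.Iio γ₀).Countable := by
    rw [← Cardinal.le_aleph0_iff_set_countable, Cardinal.mk_Iio_ordinal, Cardinal.lift_le_aleph0,
      ← Cardinal.lt_aleph_one_iff, ← Cardinal.lt_ord]
    exact hγ₀
  obtain ⟨γ, hγ, ⟨eγ⟩⟩ := aux_rank _ hγc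
  obtain ⟨j⟩ := aux_iso1
  obtain ⟨J, hJ, hJA⟩ := aux_total (j.trans i).toOrderEmbedding
  let H := fun x => E (J x)
  have hH : StrictMonoOn H (Set.Iio (Cardinal.aleph 1).ord) := fun x hx y hy hxy =>
    hE (hA (hJA x hx)) (hA (hJA y hy)) (hJ hx hy hxy)
  have hH2 : ∀ x < (Cardinal.aleph 1).ord, H x < (Cardinal.aleph 2).ord := fun x hx =>
    hE2 _ (hA (hJA x hx))
  obtain ⟨c, hc, hinj⟩ := aux_code (fun a b => f (H a) (H b))
  have key : ∀ α β γ δ, α < β → β < (Cardinal.aleph 1).ord → γ < δ → δ < (Cardinal.aleph 1).ord →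
      c (f (H α) (H β)) = c (f (H γ) (H δ)) → f (H α) (H β) = f (H γ) (H δ) := by
    intro α β γ δ h1 h2 h3 h4 h
    exact hinj ⟨α, h1.trans h2, β, h2, rfl⟩ ⟨γ, h3.trans h4, δ, h4, rfl⟩ h
  obtain ⟨A', hA', ⟨k⟩, hR⟩ := hpoly (fun a b => c (f (H a) (H b))) (fun _ _ _ _ => hc _)
    (by
      intro α β γ δ h1 h2 h3 h4 h
      have := hnorm _ _ _ _ (hH (h1.trans h2) h2 h1) (hH2 β h2) (hH (h3.trans h4) h4 h3)
        (hH2 δ h4) (key _ _ _ _ h1 h2 h3 h4 h)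
      exact hH.injOn h2 h4 this)
    (by
      refine ⟨γ, hγ, ?_⟩
      intro η β hηβ hβ
      have hη := hηβ.trans hβ
      obtain ⟨e⟩ := (hg (J η) (J β) (hA (hJA β hβ))).2
      have hle' : g (J η) (J β) ≤ γ₀ :=
        hle _ ⟨_, hJA η hη, _, hJA β hβ, hJ hη hβ hηβ, rfl⟩
      let m : {ξ | ξ < β ∧ c (f (H ξ) (H β)) = c (f (H η) (H β))} →
          {ξ | ξ < E (J β) ∧ f ξ (E (J β)) = f (E (J η)) (E (J β))} := fun ξ =>
        ⟨H ξ.1, hH (ξ.2.1.trans hβ) hβ ξ.2.1, key _ _ _ _ ξ.2.1 hβ hηβ hβ ξ.2.2⟩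
      have hm : StrictMono m := fun x y hxy => hH (x.2.1.trans hβ) (y.2.1.trans hβ) hxy
      let n : Set.Iio (g (J η) (J β)) → Set.Iio γ₀ := fun x => ⟨x.1, x.2.trans_le hle'⟩
      have hn : StrictMono n := fun x y hxy => hxy
      exact ⟨(OrderEmbedding.ofStrictMono m hm).trans
        (e.trans ((OrderEmbedding.ofStrictMono n hn).trans eγ))⟩)
  obtain ⟨l⟩ := aux_iso1
  refine ⟨Set.image H A', ?_, ⟨l.trans (k.trans ((hH.mono hA').orderIso H A'))⟩, ?_⟩
  · rintro _ ⟨x, hx, rfl⟩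
    exact hH2 x (hA' hx)
  · rintro _ ⟨α, hα, rfl⟩ _ ⟨β, hβ, rfl⟩ _ ⟨γ, hγ, rfl⟩ _ ⟨δ, hδ, rfl⟩ h1 h2 h
    have h1' := (hH.lt_iff_lt (hA' hα) (hA' hβ)).1 h1
    have h2' := (hH.lt_iff_lt (hA' hγ) (hA' hδ)).1 h2
    obtain ⟨rfl, rfl⟩ := hR α hα β hβ γ hγ δ hδ h1' h2' (congrArg c h)
    exact ⟨rfl, rfl⟩
end
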